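/- Let F be a monic polynomial in F_q[T], a ∈ F_q*, and z₁, z₂ nonnegative integers with z₁ + z₂ > (19/10)·deg F. Then the number of quadruples (A,B,C,D) of monic polynomials with deg(AB) = z₁, deg(CD) = z₂, gcd(ABCD, F) = 1, AC ≡ a·BD (mod F), and AC ≠ BD, is O(q^{z₁+z₂}·(z₁+z₂)³/φ(F)). -/

import Mathlib

open Polynomial
open scoped Classical

/-- The Euler totient on `F_q[T]`. -/
noncomputable def ffPhi {Fq : Type*} [Field Fq] (R : Polynomial Fq) : ℕ :=
  if R.natDegree = 0 then 1
  else Nat.card {A : Polynomial Fq // A.degree < R.degree ∧ IsCoprime A R}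

/-!
Put `N = A C`. The quadruples correspond to the triples `(B, D, N)` with `N ≡ a B D` modulo `F` and
`N ≠ B D`, each counted with multiplicity at most the number `d(N)` of monic divisors of `N`. If
`deg N ≤ k y`, then `d(N)` is at most the sum of nonnegative weights `w(K)` over the divisors `K` of
`N` of degree at most `y`: collect the irreducible factors of `N` by increasing degree as long as
the product `K` has degree at most `y`. Either few factors remain, so that `d(N) ≪ d(K)`, or `K` is
smooth relative to its degree, and Rankin's trick makes such `K` rare enough to offset the loss.
The cost `∑ w(K) σ₋₁(K) / |K|` is then `O(y + 1)`.

It remains to see that `K ∣ N` holds for at most a proportion `σ₋₁(K) / |K|` of the expected number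
of triples. For `deg K + deg F ≤ deg N`, fix `B` and `D` and vary `N` modulo `K F`. For
`deg K ≤ deg B`, write `N = a B D + L F`, fix `D` and `L`, and vary `B`; the greatest common divisor
of `K` and `D` produces `σ₋₁(K)`. The symmetries of the problem allow us to assume
`deg (B D) ≤ deg N` and `deg D ≤ deg B`. Then `deg N ≤ k y` for the larger `y` of the two bounds on
`deg K`, with `k` depending only on `ε`, as soon as `deg (A B C D) > (1 + ε) deg F`. The number of
ways to distribute the degrees contributes the remaining two factors `z₁ + z₂`.
-/

section Development

open Finset

lemma sum_comp_le_sum_mul {ι κ : Type*} [DecidableEq κ] {s : Finset ι} {t : Finset κ}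
    {f : ι → κ} {c g : κ → ℝ} (hf : ∀ i ∈ s, f i ∈ t) (hg : ∀ d ∈ t, 0 ≤ g d)
    (hc : ∀ d ∈ t, (#{i ∈ s | f i = d} : ℝ) ≤ c d) :
    ∑ i ∈ s, g (f i) ≤ ∑ d ∈ t, c d * g d := by
  rw [← sum_fiberwise_of_maps_to' hf]
  refine sum_le_sum fun d hd ↦ ?_
  rw [sum_const, nsmul_eq_mul]
  exact mul_le_mul_of_nonneg_right (hc d hd) (hg d hd)

section Factorization

variable {R : Type*} [Field R]

/-- `K` is `m`-smooth: all its irreducible factors have degree at most `m`. -/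
def DegSmooth (m : ℕ) (K : R[X]) : Prop :=
  ∀ p, Irreducible p → p ∣ K → p.natDegree ≤ m

/-- `K` is `m`-rough: all its irreducible factors have degree at least `m`. -/
def DegRough (m : ℕ) (K : R[X]) : Prop :=
  ∀ p, Irreducible p → p ∣ K → m ≤ p.natDegree

lemma DegSmooth.one (m : ℕ) : DegSmooth m (1 : R[X]) :=
  fun _ hp h ↦ (hp.not_isUnit (isUnit_of_dvd_one h)).elim

lemma DegRough.one (m : ℕ) : DegRough m (1 : R[X]) :=
  fun _ hp h ↦ (hp.not_isUnit (isUnit_of_dvd_one h)).elim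

lemma DegSmooth.mul {m : ℕ} {K P : R[X]} (hK : DegSmooth m K) (hP : DegSmooth m P) :
    DegSmooth m (K * P) :=
  fun p hp h ↦ (hp.prime.dvd_or_dvd h).elim (hK p hp) (hP p hp)

lemma DegRough.mul {m : ℕ} {K P : R[X]} (hK : DegRough m K) (hP : DegRough m P) :
    DegRough m (K * P) :=
  fun p hp h ↦ (hp.prime.dvd_or_dvd h).elim (hK p hp) (hP p hp)

lemma DegSmooth.of_irreducible {p : R[X]} (hp : Irreducible p) : DegSmooth p.natDegree p :=
  fun _ _ h ↦ natDegree_le_of_dvd h hp.ne_zero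

lemma DegRough.of_irreducible {p : R[X]} (hp : Irreducible p) : DegRough p.natDegree p :=
  fun _ hr h ↦ natDegree_le_of_dvd (hr.associated_of_dvd hp h).symm.dvd hr.ne_zero

lemma exists_monic_irreducible_factor_of_max_degree {N : R[X]} (hN : N.Monic) (h1 : N ≠ 1) :
    ∃ p : R[X], p.Monic ∧ Irreducible p ∧ p ∣ N ∧ DegSmooth p.natDegree N := by
  have hu : ¬IsUnit N := fun h ↦ h1 (hN.eq_one_of_isUnit h)
  obtain ⟨p₀, hp₀, hi₀, hd₀⟩ := exists_monic_irreducible_factor N hu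
  let degrees : Set ℕ := {d | ∃ p : R[X], p.Monic ∧ Irreducible p ∧ p ∣ N ∧ p.natDegree = d}
  have hbdd : BddAbove degrees :=
    ⟨N.natDegree, by rintro _ ⟨p, -, -, hp, rfl⟩; exact natDegree_le_of_dvd hp hN.ne_zero⟩
  obtain ⟨p, hp, hi, hd, hmax⟩ := Nat.sSup_mem (s := degrees) ⟨_, p₀, hp₀, hi₀, hd₀, rfl⟩ hbdd
  refine ⟨p, hp, hi, hd, fun r hr hrN ↦ hmax ▸ le_csSup hbdd ⟨normalize r, ?_⟩⟩
  exact ⟨monic_normalize hr.ne_zero, (normalize_associated r).symm.irreducible hr,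
    normalize_dvd_iff.2 hrN, natDegree_eq_of_degree_eq degree_normalize⟩

lemma monic_induction_increasing {motive : (N : R[X]) → N.Monic → Prop} (one : motive 1 monic_one)
    (mul : ∀ (p N : R[X]) (hp : p.Monic), Irreducible p → ∀ hN : N.Monic,
      DegSmooth p.natDegree N → motive N hN → motive (p * N) (hp.mul hN))
    (N : R[X]) (hN : N.Monic) : motive N hN := by
  induction hn : N.natDegree using Nat.strong_induction_on generalizing N with
  | _ n ih =>
    by_cases h1 : N = 1
    · subst h1
      exact one
    obtain ⟨p, hp, hi, ⟨c, rfl⟩, hmax⟩ := exists_monic_irreducible_factor_of_max_degree hN h1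
    have hc : c.Monic := hp.of_mul_monic_left hN
    refine mul p c hp hi hc (fun r hr hrc ↦ hmax r hr (hrc.mul_left p)) (ih _ ?_ c hc rfl)
    have := hi.natDegree_pos
    rw [hp.natDegree_mul hc] at hn
    omega

lemma exists_degSmooth_mul_degRough (L : ℕ) {N : R[X]} (hN : N.Monic) :
    ∃ K P : R[X], K.Monic ∧ P.Monic ∧ N = K * P ∧ DegSmooth L K ∧ DegRough (L + 1) P := by
  induction N, hN using monic_induction_increasing with
  | one => exact ⟨1, 1, monic_one, monic_one, (mul_one 1).symm, .one L, .one (L + 1)⟩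
  | mul p N hp hi hN _ ih =>
    obtain ⟨K, P, hK, hP, rfl, hsmooth, hrough⟩ := ih
    rcases le_or_gt p.natDegree L with hpL | hpL
    · refine ⟨p * K, P, hp.mul hK, hP, (mul_assoc p K P).symm, .mul ?_ hsmooth, hrough⟩
      exact fun r hr hrp ↦ (DegSmooth.of_irreducible hi r hr hrp).trans hpL
    · refine ⟨K, p * P, hK, hp.mul hP, mul_left_comm p K P, hsmooth, .mul ?_ hrough⟩
      exact fun r hr hrp ↦ Nat.succ_le_of_lt (hpL.trans_le (DegRough.of_irreducible hi r hr hrp))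

/-- The factors of `N` are collected in `K` in order of increasing degree until the next one would
push the degree beyond `y`; that factor has degree at least `m`. -/
lemma exists_greedy_factorization (y : ℕ) {N : R[X]} (hN : N.Monic) :
    ∃ K P : R[X], K.Monic ∧ P.Monic ∧ N = K * P ∧ K.natDegree ≤ y ∧
      (P = 1 ∨ ∃ m, 0 < m ∧ y < K.natDegree + m ∧ DegSmooth m K ∧ DegRough m P) := by
  induction N, hN using monic_induction_increasing with
  | one => exact ⟨1, 1, monic_one, monic_one, (mul_one 1).symm, by simp, .inl rfl⟩
  | mul p N hp hi hN hmax ih =>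
    obtain ⟨K, P, hK, hP, rfl, hKy, hcase⟩ := ih
    by_cases hP1 : P = 1
    · subst hP1
      rw [mul_one] at hmax ⊢
      rcases le_or_gt (p * K).natDegree y with hy | hy
      · exact ⟨p * K, 1, hp.mul hK, monic_one, (mul_one _).symm, hy, .inl rfl⟩
      · rw [hp.natDegree_mul hK, add_comm] at hy
        exact ⟨K, p, hK, hp, mul_comm p K, hKy,
          .inr ⟨p.natDegree, hi.natDegree_pos, hy, hmax, .of_irreducible hi⟩⟩
    · obtain ⟨m, hm, hy, hsmooth, hrough⟩ := hcase.resolve_left hP1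
      obtain ⟨r, -, hr, hrP, -⟩ := exists_monic_irreducible_factor_of_max_degree hP hP1
      have hmp : m ≤ p.natDegree := (hrough r hr hrP).trans (hmax r hr (hrP.mul_left K))
      exact ⟨K, p * P, hK, hp.mul hP, mul_left_comm p K P, hKy, .inr ⟨m, hm, hy, hsmooth,
        .mul (fun s hs hsp ↦ hmp.trans (DegRough.of_irreducible hi s hs hsp)) hrough⟩⟩

end Factorization

variable {Fq : Type*} [Field Fq] [Fintype Fq]

local notation "q" => Fintype.card Fq

section Counting

variable (Fq) in
/-- The polynomials of degree less than `n`. -/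
noncomputable def polysLT (n : ℕ) : Finset Fq[X] :=
  univ.map ((degreeLTEquiv Fq n).symm.toEquiv.toEmbedding.trans (.subtype _))

variable (Fq) in
/-- The monic polynomials of degree at most `n`. -/
noncomputable def monicsLE (n : ℕ) : Finset Fq[X] := {p ∈ polysLT Fq (n + 1) | p.Monic}

variable (Fq) in
/-- The monic polynomials of degree `n`. -/
noncomputable def monicsOfDegree (n : ℕ) : Finset Fq[X] := {p ∈ monicsLE Fq n | p.natDegree = n}

@[simp]
lemma mem_polysLT {n : ℕ} {p : Fq[X]} : p ∈ polysLT Fq n ↔ p.degree < n := by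
  simp only [polysLT, mem_map, mem_univ, true_and, ← mem_degreeLT]
  constructor
  · rintro ⟨v, rfl⟩
    exact Subtype.coe_prop _
  · exact fun hp ↦ ⟨degreeLTEquiv Fq n ⟨p, hp⟩, by simp⟩

lemma card_polysLT (n : ℕ) : #(polysLT Fq n) = q ^ n := by
  simp [polysLT]

@[simp]
lemma mem_monicsLE {n : ℕ} {p : Fq[X]} : p ∈ monicsLE Fq n ↔ p.Monic ∧ p.natDegree ≤ n := by
  rw [monicsLE, mem_filter, mem_polysLT, and_comm, and_congr_right_iff]
  intro hp
  rw [degree_eq_natDegree hp.ne_zero, Nat.cast_lt, Nat.lt_succ_iff]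

@[simp]
lemma mem_monicsOfDegree {n : ℕ} {p : Fq[X]} :
    p ∈ monicsOfDegree Fq n ↔ p.Monic ∧ p.natDegree = n := by
  rw [monicsOfDegree, mem_filter, mem_monicsLE, and_assoc, and_congr_right_iff]
  exact fun _ ↦ ⟨And.right, fun h ↦ ⟨h.le, h⟩⟩

lemma degree_sub_lt_of_mem_monicsOfDegree {n : ℕ} {A B : Fq[X]} (hA : A ∈ monicsOfDegree Fq n)
    (hB : B ∈ monicsOfDegree Fq n) : (A - B).degree < n := by
  rw [mem_monicsOfDegree] at hA hB
  have hdeg : A.degree = n := by rw [degree_eq_natDegree hA.1.ne_zero, hA.2]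
  have hdeg' : B.degree = n := by rw [degree_eq_natDegree hB.1.ne_zero, hB.2]
  rw [← hdeg]
  exact degree_sub_lt_left (hdeg.trans hdeg'.symm) hA.1.ne_zero
    (hA.1.leadingCoeff.trans hB.1.leadingCoeff.symm)

lemma mul_mem_monicsOfDegree {m n : ℕ} {A B : Fq[X]} (hA : A ∈ monicsOfDegree Fq m)
    (hB : B ∈ monicsOfDegree Fq n) : A * B ∈ monicsOfDegree Fq (m + n) := by
  rw [mem_monicsOfDegree] at hA hB ⊢
  exact ⟨hA.1.mul hB.1, by rw [hA.1.natDegree_mul hB.1, hA.2, hB.2]⟩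

lemma card_le_pow_of_dvd_sub {S : Finset Fq[X]} {G : Fq[X]} (hG : G ≠ 0) {n : ℕ}
    (hdvd : ∀ A ∈ S, ∀ B ∈ S, G ∣ A - B) (hdeg : ∀ A ∈ S, ∀ B ∈ S, (A - B).degree < n) :
    #S ≤ q ^ (n - G.natDegree) := by
  obtain rfl | ⟨A₀, hA₀⟩ := S.eq_empty_or_nonempty
  · simp
  have mul_quotient (A) (hA : A ∈ S) : G * ((A - A₀) / G) = A - A₀ :=
    EuclideanDomain.mul_div_cancel' hG (hdvd A hA A₀ hA₀)
  rw [← card_polysLT]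
  refine card_le_card_of_injOn (fun A ↦ (A - A₀) / G) (fun A hA ↦ ?_) fun A hA B hB hAB ↦ ?_
  · have hlt := hdeg A hA A₀ hA₀
    rw [← mul_quotient A hA] at hlt
    rw [mem_coe, mem_polysLT]
    by_cases h0 : (A - A₀) / G = 0
    · simp [h0]
    rw [degree_mul, degree_eq_natDegree h0, degree_eq_natDegree hG, ← Nat.cast_add,
      Nat.cast_lt] at hlt
    rw [degree_eq_natDegree h0, Nat.cast_lt]
    omega
  · have := mul_quotient A hA
    rw [show (A - A₀) / G = (B - A₀) / G from hAB, mul_quotient B hB] at this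
    exact (sub_left_inj.1 this).symm

lemma card_monicsOfDegree_le (n : ℕ) : #(monicsOfDegree Fq n) ≤ q ^ n := by
  simpa using card_le_pow_of_dvd_sub (S := monicsOfDegree Fq n) (n := n) one_ne_zero
    (fun _ _ _ _ ↦ one_dvd _) fun _ hA _ hB ↦ degree_sub_lt_of_mem_monicsOfDegree hA hB

variable (Fq) in
lemma two_le_card : (2 : ℝ) ≤ q := mod_cast Fintype.one_lt_card

lemma sum_monicsLE_le (n : ℕ) {g : ℕ → ℝ} (hg : ∀ d, 0 ≤ g d) :
    ∑ K ∈ monicsLE Fq n, g K.natDegree ≤ ∑ d ∈ range (n + 1), (q : ℝ) ^ d * g d := by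
  refine sum_comp_le_sum_mul (fun K hK ↦ ?_) (fun d _ ↦ hg d) fun d _ ↦ ?_
  · exact mem_range_succ_iff.2 (mem_monicsLE.1 hK).2
  · refine mod_cast le_trans (card_le_card fun K hK ↦ ?_) (card_monicsOfDegree_le d)
    rw [mem_filter, mem_monicsLE] at hK
    exact mem_monicsOfDegree.2 ⟨hK.1.1, hK.2⟩

lemma sum_monicsLE_pow_le (n : ℕ) {v : ℝ} (hv : 0 ≤ v) (hv1 : v < 1) :
    ∑ K ∈ monicsLE Fq n, v ^ K.natDegree * ((q : ℝ) ^ K.natDegree)⁻¹ ≤ (1 - v)⁻¹ := by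
  refine (sum_monicsLE_le n (g := fun d ↦ v ^ d * ((q : ℝ) ^ d)⁻¹) fun d ↦ by positivity).trans ?_
  rw [sum_congr rfl fun d _ ↦ mul_left_comm .., sum_congr rfl fun d _ ↦
    congrArg (v ^ d * ·) (mul_inv_cancel₀ (by positivity))]
  simp only [mul_one]
  rw [← tsum_geometric_of_lt_one hv hv1]
  exact (summable_geometric_of_lt_one hv hv1).sum_le_tsum _ fun _ _ ↦ by positivity

end Counting

section Irreducibles

variable (Fq) in
/-- The monic irreducible polynomials of degree at most `m`. -/
noncomputable def irreduciblesLE (m : ℕ) : Finset Fq[X] := {p ∈ monicsLE Fq m | Irreducible p}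

@[simp]
lemma mem_irreduciblesLE {m : ℕ} {p : Fq[X]} :
    p ∈ irreduciblesLE Fq m ↔ (p.Monic ∧ p.natDegree ≤ m) ∧ Irreducible p := by
  simp [irreduciblesLE]

lemma isCoprime_of_monic_irreducible {R : Type*} [Field R] {p r : R[X]} (hp : p.Monic)
    (hr : r.Monic) (hpi : Irreducible p) (hri : Irreducible r) (hne : p ≠ r) : IsCoprime p r :=
  hpi.coprime_iff_not_dvd.2 fun h ↦
    hne (eq_of_monic_of_associated hp hr (hpi.associated_of_dvd hri h))

/-- The monic irreducible polynomials of degree `d` divide `X ^ q ^ d - X`. -/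
lemma natDegree_mul_card_irreducible_le (d : ℕ) :
    d * #{p ∈ monicsOfDegree Fq d | Irreducible p} ≤ q ^ d := by
  obtain rfl | hd := eq_or_ne d 0
  · simp
  set S := {p ∈ monicsOfDegree Fq d | Irreducible p}
  have hS (p) (hp : p ∈ S) : p.Monic ∧ p.natDegree = d ∧ Irreducible p := by
    simpa [S, and_assoc] using hp
  have hdvd : ∏ p ∈ S, p ∣ X ^ q ^ d - X := by
    refine prod_dvd_of_coprime (fun p hp r hr hpr ↦ ?_) fun p hp ↦ ?_
    · obtain ⟨⟨hp, -, hpi⟩, hr, -, hri⟩ := hS p hp, hS r hr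
      exact isCoprime_of_monic_irreducible hp hr hpi hri hpr
    · rw [← Nat.card_eq_fintype_card,
        ← (hS p hp).2.2.natDegree_dvd_iff_dvd_X_pow_card_pow_sub_X, (hS p hp).2.1]
  have hdeg := natDegree_le_of_dvd hdvd
    (FiniteField.X_pow_card_pow_sub_X_ne_zero Fq hd Fintype.one_lt_card)
  rwa [FiniteField.X_pow_card_pow_sub_X_natDegree_eq Fq hd Fintype.one_lt_card,
    natDegree_prod_of_monic _ _ fun p hp ↦ (hS p hp).1, sum_congr rfl fun p hp ↦ (hS p hp).2.1,
    sum_const, smul_eq_mul, mul_comm] at hdeg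

lemma sum_irreduciblesLE_le (m : ℕ) {g : ℕ → ℝ} (hg : ∀ d, 0 ≤ g d) :
    ∑ p ∈ irreduciblesLE Fq m, g p.natDegree ≤ ∑ d ∈ Icc 1 m, (q : ℝ) ^ d / d * g d := by
  refine sum_comp_le_sum_mul (fun p hp ↦ ?_) (fun d _ ↦ hg d) fun d hd ↦ ?_
  · rw [mem_irreduciblesLE] at hp
    exact mem_Icc.2 ⟨hp.2.natDegree_pos, hp.1.2⟩
  · have hsub : {p ∈ irreduciblesLE Fq m | p.natDegree = d} ⊆
        {p ∈ monicsOfDegree Fq d | Irreducible p} := fun p ↦ by simp +contextual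
    rw [le_div_iff₀ (mod_cast (mem_Icc.1 hd).1), mul_comm]
    exact mod_cast (Nat.mul_le_mul_left d (card_le_card hsub)).trans
      (natDegree_mul_card_irreducible_le d)

lemma card_irreduciblesLE_le {L Q : ℕ} (hQ : q ^ L ≤ Q) : #(irreduciblesLE Fq L) ≤ Q ^ 2 := by
  obtain rfl | hL := eq_or_ne L 0
  · have : irreduciblesLE Fq 0 = ∅ := eq_empty_of_forall_notMem fun p hp ↦ by
      rw [mem_irreduciblesLE] at hp
      exact hp.2.natDegree_pos.not_ge hp.1.2
    simp [this]
  calc #(irreduciblesLE Fq L) ≤ #(polysLT Fq (L + 1)) :=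
        card_le_card ((filter_subset _ _).trans (filter_subset _ _))
    _ = q ^ (L + 1) := card_polysLT _
    _ ≤ q ^ (L * 2) := Nat.pow_le_pow_right Fintype.card_pos (by omega)
    _ ≤ Q ^ 2 := by rw [pow_mul]; exact Nat.pow_le_pow_left hQ 2

end Irreducibles

section Divisors

/-- The monic divisors of a nonzero polynomial `N`. -/
noncomputable def monicDivisors (N : Fq[X]) : Finset Fq[X] :=
  {K ∈ monicsLE Fq N.natDegree | K ∣ N}

lemma mem_monicDivisors {N : Fq[X]} (hN : N ≠ 0) {K : Fq[X]} :
    K ∈ monicDivisors N ↔ K.Monic ∧ K ∣ N := by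
  rw [monicDivisors, mem_filter, mem_monicsLE, and_assoc, and_congr_right_iff,
    and_iff_right_iff_imp]
  exact fun _ h ↦ natDegree_le_of_dvd h hN

lemma one_mem_monicDivisors {N : Fq[X]} (hN : N ≠ 0) : 1 ∈ monicDivisors N :=
  (mem_monicDivisors hN).2 ⟨monic_one, one_dvd N⟩

lemma card_monicDivisors_mul_irreducible_le {K p : Fq[X]} (hK : K ≠ 0) (hp : p.Monic)
    (hi : Irreducible p) : #(monicDivisors (K * p)) ≤ 2 * #(monicDivisors K) := by
  have hsub : monicDivisors (K * p) ⊆ monicDivisors K ∪ (monicDivisors K).image (p * ·) := by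
    intro D hD
    rw [mem_monicDivisors (mul_ne_zero hK hp.ne_zero)] at hD
    obtain ⟨hD, hDK⟩ := hD
    rw [mem_union, mem_image, mem_monicDivisors hK]
    by_cases hpD : p ∣ D
    · obtain ⟨E, rfl⟩ := hpD
      rw [mul_comm K, mul_dvd_mul_iff_left hp.ne_zero] at hDK
      exact .inr ⟨E, (mem_monicDivisors hK).2 ⟨hp.of_mul_monic_left hD, hDK⟩, rfl⟩
    · have hcop : IsCoprime p D := hi.coprime_iff_not_dvd.2 hpD
      exact .inl ⟨hD, hcop.symm.dvd_of_dvd_mul_right hDK⟩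
  calc #(monicDivisors (K * p))
      ≤ #(monicDivisors K) + #((monicDivisors K).image (p * ·)) :=
        (card_le_card hsub).trans (card_union_le _ _)
    _ ≤ #(monicDivisors K) + #(monicDivisors K) := Nat.add_le_add_left card_image_le _
    _ = 2 * #(monicDivisors K) := (two_mul _).symm

lemma card_monicDivisors_mul_le_of_degRough {m : ℕ} (hm : 0 < m) {P : Fq[X]} (hP : P.Monic) :
    ∀ {K : Fq[X]}, K ≠ 0 → DegRough m P →
      #(monicDivisors (K * P)) ≤ 2 ^ (P.natDegree / m) * #(monicDivisors K) := by
  induction P, hP using monic_induction_increasing with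
  | one => simp
  | mul p N hp hi hN _ ih =>
    intro K hK hrough
    have hpm : m ≤ p.natDegree := hrough p hi (dvd_mul_right p N)
    calc #(monicDivisors (K * (p * N)))
        ≤ 2 ^ (N.natDegree / m) * #(monicDivisors (K * p)) := by
          rw [← mul_assoc]
          exact ih (mul_ne_zero hK hp.ne_zero) fun r hr h ↦ hrough r hr (h.mul_left p)
      _ ≤ 2 ^ (N.natDegree / m) * (2 * #(monicDivisors K)) :=
          Nat.mul_le_mul_left _ (card_monicDivisors_mul_irreducible_le hK hp hi)
      _ = 2 ^ ((m + N.natDegree) / m) * #(monicDivisors K) := by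
          rw [Nat.add_div_left _ hm, pow_succ, mul_assoc]
      _ ≤ 2 ^ ((p * N).natDegree / m) * #(monicDivisors K) := by
          rw [hp.natDegree_mul hN]
          gcongr
          norm_num

lemma complement_of_mem_monicDivisors {K D : Fq[X]} (hK : K.Monic)
    (hD : D ∈ monicDivisors K) : D * (K / D) = K ∧ K / D ∈ monicDivisors K ∧
      K.natDegree = D.natDegree + (K / D).natDegree := by
  rw [mem_monicDivisors hK.ne_zero] at hD
  have hmul : D * (K / D) = K := EuclideanDomain.mul_div_cancel' hD.1.ne_zero hD.2
  have hm : (K / D).Monic := hD.1.of_mul_monic_left (by rwa [hmul])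
  refine ⟨hmul, (mem_monicDivisors hK.ne_zero).2 ⟨hm, D, (mul_comm D _ ▸ hmul).symm⟩, ?_⟩
  rw [← hD.1.natDegree_mul hm, hmul]

/-- AM-GM for the pairs of complementary divisors of `K`. -/
lemma card_monicDivisors_mul_pow_le {K : Fq[X]} (hK : K.Monic) (u : ℝ) :
    #(monicDivisors K) * u ^ K.natDegree ≤ ∑ D ∈ monicDivisors K, (u ^ 2) ^ D.natDegree := by
  have hmem (D) (hD : D ∈ monicDivisors K) : K / D ∈ monicDivisors K :=
    (complement_of_mem_monicDivisors hK hD).2.1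
  have hinvol (D) (hD : D ∈ monicDivisors K) : K / (K / D) = D :=
    (EuclideanDomain.eq_div_of_mul_eq_left
      ((mem_monicDivisors hK.ne_zero).1 (hmem D hD)).1.ne_zero
      (complement_of_mem_monicDivisors hK hD).1).symm
  have hreflect : ∑ D ∈ monicDivisors K, (u ^ 2) ^ (K / D).natDegree =
      ∑ D ∈ monicDivisors K, (u ^ 2) ^ D.natDegree :=
    sum_bij' (fun D _ ↦ K / D) (fun D _ ↦ K / D) hmem hmem hinvol hinvol fun _ _ ↦ rfl
  have hpair (D) (hD : D ∈ monicDivisors K) :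
      2 * u ^ K.natDegree ≤ (u ^ 2) ^ D.natDegree + (u ^ 2) ^ (K / D).natDegree := by
    rw [(complement_of_mem_monicDivisors hK hD).2.2, pow_add, ← mul_assoc, pow_right_comm,
      pow_right_comm u 2]
    exact two_mul_le_add_sq _ _
  have hsum := sum_le_sum hpair
  rw [sum_add_distrib, hreflect, sum_const, nsmul_eq_mul] at hsum
  linarith

end Divisors

section Factored

/-- The monic polynomials of degree at most `y` whose monic irreducible factors all belong to `s`;
the analogue of `Nat.factoredNumbers`. -/
noncomputable def factoredMonics (s : Finset Fq[X]) (y : ℕ) : Finset Fq[X] :=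
  {K ∈ monicsLE Fq y | ∀ p : Fq[X], p.Monic → Irreducible p → p ∣ K → p ∈ s}

lemma mem_factoredMonics {s : Finset Fq[X]} {y : ℕ} {K : Fq[X]} :
    K ∈ factoredMonics s y ↔ (K.Monic ∧ K.natDegree ≤ y) ∧
      ∀ p : Fq[X], p.Monic → Irreducible p → p ∣ K → p ∈ s := by
  simp [factoredMonics]

lemma mem_factoredMonics_irreduciblesLE {m y : ℕ} {K : Fq[X]} (hK : K.Monic)
    (hy : K.natDegree ≤ y) (hsmooth : DegSmooth m K) :
    K ∈ factoredMonics (irreduciblesLE Fq m) y :=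
  mem_factoredMonics.2 ⟨⟨hK, hy⟩, fun p hp hi h ↦ mem_irreduciblesLE.2 ⟨⟨hp, hsmooth p hi h⟩, hi⟩⟩

lemma mem_factoredMonics_of_dvd {s : Finset Fq[X]} {y : ℕ} {D K : Fq[X]}
    (hK : K ∈ factoredMonics s y) (hD : D.Monic) (hDK : D ∣ K) : D ∈ factoredMonics s y := by
  rw [mem_factoredMonics] at hK ⊢
  exact ⟨⟨hD, (natDegree_le_of_dvd hDK hK.1.1.ne_zero).trans hK.1.2⟩,
    fun p hp hi hpD ↦ hK.2 p hp hi (hpD.trans hDK)⟩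

lemma factoredMonics_empty_subset (y : ℕ) : factoredMonics (∅ : Finset Fq[X]) y ⊆ {1} := by
  intro K hK
  rw [mem_factoredMonics] at hK
  by_contra h1
  obtain ⟨p, hp, hi, hpK, -⟩ := exists_monic_irreducible_factor_of_max_degree hK.1.1
    (by simpa using h1)
  exact notMem_empty p (hK.2 p hp hi hpK)

lemma sum_factoredMonics_dvd_le (s : Finset Fq[X]) (y : ℕ) {h : Fq[X]} (hh : h.Monic) {v : ℝ}
    (hv : 0 ≤ v) : ∑ K ∈ factoredMonics s y with h ∣ K, v ^ K.natDegree ≤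
      v ^ h.natDegree * ∑ K ∈ factoredMonics s y, v ^ K.natDegree := by
  have hsub : {K ∈ factoredMonics s y | h ∣ K} ⊆
      {K ∈ (factoredMonics s y).image (h * ·) | K.Monic} := by
    intro K hK
    rw [mem_filter] at hK
    obtain ⟨hK, c, rfl⟩ := hK
    have hm := (mem_factoredMonics.1 hK).1.1
    exact mem_filter.2 ⟨mem_image_of_mem _ (mem_factoredMonics_of_dvd hK
      (hh.of_mul_monic_left hm) (dvd_mul_left c h)), hm⟩
  calc ∑ K ∈ factoredMonics s y with h ∣ K, v ^ K.natDegree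
      ≤ ∑ K ∈ (factoredMonics s y).image (h * ·), v ^ K.natDegree :=
        sum_le_sum_of_subset_of_nonneg (hsub.trans (filter_subset _ _)) fun _ _ _ ↦ by positivity
    _ = ∑ K ∈ factoredMonics s y, v ^ (h * K).natDegree :=
        sum_image fun _ _ _ _ ↦ mul_left_cancel₀ hh.ne_zero
    _ = v ^ h.natDegree * ∑ K ∈ factoredMonics s y, v ^ K.natDegree := by
        rw [mul_sum]
        refine sum_congr rfl fun K hK ↦ ?_
        rw [hh.natDegree_mul (mem_factoredMonics.1 hK).1.1, pow_add]

lemma sum_factoredMonics_le_prod {s : Finset Fq[X]} (hs : ∀ p ∈ s, p.Monic ∧ Irreducible p)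
    (y : ℕ) {v : ℝ} (hv : 0 ≤ v) (hv1 : v < 1) :
    ∑ K ∈ factoredMonics s y, v ^ K.natDegree ≤ ∏ p ∈ s, (1 - v ^ p.natDegree)⁻¹ := by
  induction s using Finset.induction_on with
  | empty =>
    refine (sum_le_sum_of_subset_of_nonneg (factoredMonics_empty_subset y)
      fun _ _ _ ↦ by positivity).trans ?_
    simp
  | insert p s hps ih =>
    obtain ⟨hp, hi⟩ := hs p (mem_insert_self p s)
    have hpos : 0 < 1 - v ^ p.natDegree :=
      sub_pos.2 (pow_lt_one₀ hv hv1 hi.natDegree_pos.ne')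
    have hsub : {K ∈ factoredMonics (insert p s) y | ¬p ∣ K} ⊆ factoredMonics s y := by
      intro K hK
      rw [mem_filter, mem_factoredMonics] at hK
      refine mem_factoredMonics.2 ⟨hK.1.1, fun r hr hri hrK ↦ ?_⟩
      exact mem_of_mem_insert_of_ne (hK.1.2 r hr hri hrK) fun h ↦ hK.2 (h ▸ hrK)
    have hdvd := sum_factoredMonics_dvd_le (insert p s) y hp hv
    have hndvd : ∑ K ∈ factoredMonics (insert p s) y with ¬p ∣ K, v ^ K.natDegree ≤
        ∏ p ∈ s, (1 - v ^ p.natDegree)⁻¹ :=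
      (sum_le_sum_of_subset_of_nonneg hsub fun _ _ _ ↦ by positivity).trans
        (ih fun r hr ↦ hs r (mem_insert_of_mem hr))
    rw [prod_insert hps, inv_mul_eq_div, le_div_iff₀ hpos]
    linarith [sum_filter_add_sum_filter_not (factoredMonics (insert p s) y) (p ∣ ·)
      fun K ↦ v ^ K.natDegree]

lemma sum_factoredMonics_irreduciblesLE_le (m y : ℕ) {v : ℝ} (hv : 0 ≤ v) (hv1 : v < 1) :
    ∑ K ∈ factoredMonics (irreduciblesLE Fq m) y, v ^ K.natDegree ≤
      ∏ p ∈ irreduciblesLE Fq m, (1 - v ^ p.natDegree)⁻¹ :=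
  sum_factoredMonics_le_prod
    (fun _ hp ↦ ⟨(mem_irreduciblesLE.1 hp).1.1, (mem_irreduciblesLE.1 hp).2⟩) y hv hv1

lemma prod_irreduciblesLE_le_of_le {L Q : ℕ} (hQ : q ^ L ≤ Q) {v κ : ℝ} (hv : 0 ≤ v) (hvκ : v ≤ κ)
    (hκ : κ < 1) :
    ∏ p ∈ irreduciblesLE Fq L, (1 - v ^ p.natDegree)⁻¹ ≤ (1 - κ)⁻¹ ^ Q ^ 2 := by
  have hone : 1 ≤ (1 - κ)⁻¹ := (one_le_inv₀ (by linarith)).2 (by linarith)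
  have hfactor (p) (hp : p ∈ irreduciblesLE Fq L) : v ^ p.natDegree ≤ κ :=
    (pow_le_of_le_one hv (by linarith) (mem_irreduciblesLE.1 hp).2.natDegree_pos.ne').trans hvκ
  calc ∏ p ∈ irreduciblesLE Fq L, (1 - v ^ p.natDegree)⁻¹
      ≤ ∏ p ∈ irreduciblesLE Fq L, (1 - κ)⁻¹ := by
        refine prod_le_prod (fun p hp ↦ inv_nonneg.2 ?_) fun p hp ↦ inv_anti₀ ?_ ?_
        all_goals linarith [hfactor p hp]
    _ ≤ (1 - κ)⁻¹ ^ Q ^ 2 := by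
        rw [prod_const]
        exact pow_le_pow_right₀ hone (card_irreduciblesLE_le hQ)

lemma inv_one_sub_le_exp {x : ℝ} (hx : x ≤ 3 / 5) :
    (1 - x)⁻¹ ≤ Real.exp (x + 3 * x ^ 2) := by
  rw [inv_le_iff_one_le_mul₀ (by linarith)]
  calc 1 ≤ (x + 3 * x ^ 2 + 1) * (1 - x) := by nlinarith [sq_nonneg x]
    _ ≤ Real.exp (x + 3 * x ^ 2) * (1 - x) :=
        mul_le_mul_of_nonneg_right (Real.add_one_le_exp _) (by linarith)

lemma pow_div_le_inv_add {t T : ℝ} (ht : 1 ≤ t) {d M : ℕ} (hT : t ^ M ≤ T) (hd : 0 < d)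
    (hdM : d ≤ M) : t ^ d / d ≤ (d : ℝ)⁻¹ + (T - 1) / M := by
  have hd' : (0 : ℝ) < d := mod_cast hd
  have hM' : (0 : ℝ) < M := mod_cast hd.trans_le hdM
  have hbernoulli : t ^ d ≤ 1 + d / M * (T - 1) := by
    have hT1 : 1 ≤ T := (one_le_pow₀ ht).trans hT
    calc t ^ d = (t ^ M) ^ (d / M : ℝ) := by
          rw [← Real.rpow_natCast_mul (by linarith), mul_div_cancel₀ _ hM'.ne', Real.rpow_natCast]
      _ ≤ (1 + (T - 1)) ^ (d / M : ℝ) :=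
          Real.rpow_le_rpow (by positivity) (by linarith) (by positivity)
      _ ≤ 1 + d / M * (T - 1) := rpow_one_add_le_one_add_mul_self (by linarith) (by positivity)
          ((div_le_one hM').2 (mod_cast hdM))
  rw [div_le_iff₀ hd']
  refine hbernoulli.trans_eq ?_
  field_simp

lemma div_le_three_fifths {t Q : ℝ} (hQ : 2 ≤ Q) (htQ : t ^ 4 ≤ Q) : t / Q ≤ 3 / 5 := by
  rw [div_le_iff₀ (by linarith)]
  by_contra! h
  have hpow : (3 / 5 * Q) ^ 4 < t ^ 4 := pow_lt_pow_left₀ h (by positivity) (by norm_num)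
  have hcube : 2 ^ 3 ≤ Q ^ 3 := pow_le_pow_left₀ (by norm_num) hQ 3
  nlinarith

lemma sum_Icc_pow_div_le {t T : ℝ} (ht : 1 ≤ t) {M : ℕ} (hT : t ^ M ≤ T) :
    ∑ d ∈ Icc 1 M, t ^ d / d ≤ T + Real.log (M + 1) := by
  have hT1 : 1 ≤ T := (one_le_pow₀ ht).trans hT
  have hharmonic : ∑ d ∈ Icc 1 M, (d : ℝ)⁻¹ ≤ 1 + Real.log (M + 1) := by
    have h := harmonic_le_one_add_log (M + 1)
    rw [harmonic_eq_sum_Icc] at h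
    push_cast at h
    exact (sum_le_sum_of_subset_of_nonneg (Icc_subset_Icc_right M.le_succ)
      fun _ _ _ ↦ by positivity).trans h
  calc ∑ d ∈ Icc 1 M, t ^ d / d ≤ ∑ d ∈ Icc 1 M, ((d : ℝ)⁻¹ + (T - 1) / M) :=
        sum_le_sum fun d hd ↦ pow_div_le_inv_add ht hT (mem_Icc.1 hd).1 (mem_Icc.1 hd).2
    _ = ∑ d ∈ Icc 1 M, (d : ℝ)⁻¹ + M * ((T - 1) / M) := by simp [sum_add_distrib]
    _ ≤ (1 + Real.log (M + 1)) + (T - 1) := by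
        rw [mul_div_left_comm]
        exact add_le_add hharmonic (mul_le_of_le_one_right (by linarith) (div_self_le_one _))
    _ = T + Real.log (M + 1) := by ring

lemma sum_Icc_sq_pow_div_le {t T Q : ℝ} (ht : 1 ≤ t) (hQ : 2 ≤ Q) {M : ℕ} (hT : t ^ M ≤ T) :
    ∑ d ∈ Icc 1 M, (t ^ d) ^ 2 / (d * Q ^ d) ≤ 2 * T ^ 2 := by
  calc ∑ d ∈ Icc 1 M, (t ^ d) ^ 2 / (d * Q ^ d) ≤ ∑ d ∈ Icc 1 M, T ^ 2 * (1 / 2) ^ d := by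
        refine sum_le_sum fun d hd ↦ ?_
        have htd : t ^ d ≤ T := (pow_le_pow_right₀ ht (mem_Icc.1 hd).2).trans hT
        have hQd : (2 : ℝ) ^ d ≤ d * Q ^ d :=
          (pow_le_pow_left₀ zero_le_two hQ d).trans
            (le_mul_of_one_le_left (by positivity) (mod_cast (mem_Icc.1 hd).1))
        rw [one_div, inv_pow, ← div_eq_mul_inv]
        gcongr
    _ ≤ T ^ 2 * ∑ d ∈ range (M + 1), (1 / 2) ^ d := by
        rw [← mul_sum]
        gcongr ?_ * ?_
        refine sum_le_sum_of_subset_of_nonneg (fun d hd ↦ ?_) fun _ _ _ ↦ by positivity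
        exact mem_range_succ_iff.2 (mem_Icc.1 hd).2
    _ ≤ 2 * T ^ 2 := by
        rw [mul_comm]
        exact mul_le_mul_of_nonneg_right (sum_geometric_two_le _) (sq_nonneg T)

/-- Mertens' product bound, shifted by `t` as Rankin's trick requires. -/
lemma prod_irreduciblesLE_le_of_pow_le {M : ℕ} {t T : ℝ} (ht : 1 ≤ t) (hT : t ^ M ≤ T)
    (htq : t ^ 4 ≤ q) :
    ∏ p ∈ irreduciblesLE Fq M, (1 - (t / q) ^ p.natDegree)⁻¹ ≤
      Real.exp (T + 6 * T ^ 2) * (M + 1) := by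
  have hq := two_le_card Fq
  set v : ℝ := t / q with hv
  have hv0 : 0 ≤ v := by positivity
  have hfactor (p) (hp : p ∈ irreduciblesLE Fq M) : v ^ p.natDegree ≤ 3 / 5 := by
    have hv1 := div_le_three_fifths hq htq
    exact (pow_le_of_le_one hv0 (by linarith)
      (mem_irreduciblesLE.1 hp).2.natDegree_pos.ne').trans hv1
  have hsum : ∑ p ∈ irreduciblesLE Fq M, (v ^ p.natDegree + 3 * (v ^ p.natDegree) ^ 2) ≤
      (T + 6 * T ^ 2) + Real.log (M + 1) := by
    refine (sum_irreduciblesLE_le M (g := fun d ↦ v ^ d + 3 * (v ^ d) ^ 2)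
      fun d ↦ by positivity).trans ?_
    calc ∑ d ∈ Icc 1 M, (q : ℝ) ^ d / d * (v ^ d + 3 * (v ^ d) ^ 2)
        = ∑ d ∈ Icc 1 M, t ^ d / d + 3 * ∑ d ∈ Icc 1 M, (t ^ d) ^ 2 / (d * (q : ℝ) ^ d) := by
          rw [mul_sum, ← sum_add_distrib]
          refine sum_congr rfl fun d _ ↦ ?_
          rw [hv, div_pow]
          field_simp
      _ ≤ (T + Real.log (M + 1)) + 3 * (2 * T ^ 2) := by
          gcongr
          · exact sum_Icc_pow_div_le ht hT
          · exact sum_Icc_sq_pow_div_le ht hq hT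
      _ = (T + 6 * T ^ 2) + Real.log (M + 1) := by ring
  calc ∏ p ∈ irreduciblesLE Fq M, (1 - v ^ p.natDegree)⁻¹
      ≤ ∏ p ∈ irreduciblesLE Fq M, Real.exp (v ^ p.natDegree + 3 * (v ^ p.natDegree) ^ 2) := by
        refine prod_le_prod (fun p hp ↦ inv_nonneg.2 ?_) fun p hp ↦
          inv_one_sub_le_exp (hfactor p hp)
        linarith [hfactor p hp]
    _ ≤ Real.exp ((T + 6 * T ^ 2) + Real.log (M + 1)) := by
        rw [← Real.exp_sum]
        exact Real.exp_le_exp.2 hsum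
    _ = Real.exp (T + 6 * T ^ 2) * (M + 1) := by
        rw [Real.exp_add, Real.exp_log (by positivity)]

end Factored

section DivisorBound

lemma card_monicDivisors_le_of_degSmooth {L Q : ℕ} (hQ : q ^ L ≤ Q) {ρ κ : ℝ} (hρ : 0 < ρ)
    (hρκ : ρ⁻¹ ≤ κ) (hκ : κ < 1) {K : Fq[X]} (hK : K.Monic) (hsmooth : DegSmooth L K) :
    #(monicDivisors K) ≤ (1 - κ)⁻¹ ^ Q ^ 2 * ρ ^ K.natDegree := by
  have hsub : monicDivisors K ⊆ factoredMonics (irreduciblesLE Fq L) K.natDegree := fun D hD ↦ by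
    rw [mem_monicDivisors hK.ne_zero] at hD
    exact mem_factoredMonics_of_dvd
      (mem_factoredMonics_irreduciblesLE hK le_rfl hsmooth) hD.1 hD.2
  have hterm (D) (hD : D ∈ monicDivisors K) : ρ⁻¹ ^ K.natDegree ≤ ρ⁻¹ ^ D.natDegree :=
    pow_le_pow_of_le_one (by positivity) (by linarith)
      (natDegree_le_of_dvd ((mem_monicDivisors hK.ne_zero).1 hD).2 hK.ne_zero)
  rw [← div_le_iff₀ (by positivity), div_eq_mul_inv, ← inv_pow]
  calc #(monicDivisors K) * ρ⁻¹ ^ K.natDegree ≤ ∑ D ∈ monicDivisors K, ρ⁻¹ ^ D.natDegree := by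
        rw [← nsmul_eq_mul]
        exact card_nsmul_le_sum _ _ _ hterm
    _ ≤ ∑ D ∈ factoredMonics (irreduciblesLE Fq L) K.natDegree, ρ⁻¹ ^ D.natDegree :=
        sum_le_sum_of_subset_of_nonneg hsub fun _ _ _ ↦ by positivity
    _ ≤ ∏ p ∈ irreduciblesLE Fq L, (1 - ρ⁻¹ ^ p.natDegree)⁻¹ :=
        sum_factoredMonics_irreduciblesLE_le L _ (by positivity) (by linarith)
    _ ≤ (1 - κ)⁻¹ ^ Q ^ 2 := prod_irreduciblesLE_le_of_le hQ (by positivity) hρκ hκ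

lemma two_pow_div_le_pow {ρ : ℝ} (hρ : 1 ≤ ρ) {m : ℕ} (hm : 2 ≤ ρ ^ m) (n : ℕ) :
    2 ^ (n / m) ≤ ρ ^ n :=
  calc (2 : ℝ) ^ (n / m) ≤ (ρ ^ m) ^ (n / m) := pow_le_pow_left₀ zero_le_two hm _
    _ = ρ ^ (m * (n / m)) := (pow_mul ρ m _).symm
    _ ≤ ρ ^ n := pow_le_pow_right₀ hρ (Nat.mul_div_le n m)

/-- The constant in the divisor bound `d(N) ≤ C_ε q ^ (ε deg N)`. -/
noncomputable def divisorBoundConst (ε : ℝ) : ℝ := (1 - 2 ^ (-ε))⁻¹ ^ (2 ^ ⌈1 / ε⌉₊) ^ 2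

lemma two_rpow_neg_lt_one {ε : ℝ} (hε : 0 < ε) : (2 : ℝ) ^ (-ε) < 1 :=
  Real.rpow_lt_one_of_one_lt_of_neg one_lt_two (neg_lt_zero.2 hε)

lemma divisorBoundConst_pos {ε : ℝ} (hε : 0 < ε) : 0 < divisorBoundConst ε :=
  pow_pos (inv_pos.2 (sub_pos.2 (two_rpow_neg_lt_one hε))) _

/-- Irreducible factors of size `|p| > 2 ^ (1 / ε)` double the number of divisors, which is less
than `|p| ^ ε`; there are boundedly many smaller ones. -/
theorem card_monicDivisors_le_rpow {ε : ℝ} (hε : 0 < ε) {N : Fq[X]} (hN : N.Monic) :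
    #(monicDivisors N) ≤ divisorBoundConst ε * (q : ℝ) ^ (ε * N.natDegree) := by
  have hq := two_le_card Fq
  set ρ : ℝ := (q : ℝ) ^ ε with hρ_def
  set Q : ℕ := 2 ^ ⌈1 / ε⌉₊ with hQ_def
  set L : ℕ := Nat.log q Q
  have hρ : 1 ≤ ρ := Real.one_le_rpow (by linarith) hε.le
  have hρκ : ρ⁻¹ ≤ 2 ^ (-ε) := by
    rw [Real.rpow_neg zero_le_two]
    exact inv_anti₀ (by positivity) (Real.rpow_le_rpow zero_le_two hq hε.le)
  have htwo : 2 ≤ ρ ^ (L + 1) := by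
    have hQL : (Q : ℝ) ≤ (q : ℝ) ^ (L + 1) :=
      mod_cast (Nat.lt_pow_succ_log_self Fintype.one_lt_card Q).le
    calc (2 : ℝ) = 2 ^ (1 / ε * ε) := by rw [one_div_mul_cancel hε.ne', Real.rpow_one]
      _ ≤ 2 ^ (⌈1 / ε⌉₊ * ε) := Real.rpow_le_rpow_of_exponent_le one_le_two
          (mul_le_mul_of_nonneg_right (Nat.le_ceil _) hε.le)
      _ = (Q : ℝ) ^ ε := by rw [Real.rpow_natCast_mul zero_le_two, hQ_def]; norm_cast
      _ ≤ ((q : ℝ) ^ (L + 1)) ^ ε := Real.rpow_le_rpow (by positivity) hQL hε.le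
      _ = ρ ^ (L + 1) := (Real.rpow_pow_comm (by positivity) ε _).symm
  obtain ⟨K, P, hK, hP, rfl, hsmooth, hrough⟩ := exists_degSmooth_mul_degRough L hN
  calc (#(monicDivisors (K * P)) : ℝ)
      ≤ 2 ^ (P.natDegree / (L + 1)) * #(monicDivisors K) :=
        mod_cast card_monicDivisors_mul_le_of_degRough L.succ_pos hP hK.ne_zero hrough
    _ ≤ ρ ^ P.natDegree * (divisorBoundConst ε * ρ ^ K.natDegree) := by
        gcongr
        · exact two_pow_div_le_pow hρ htwo _
        · exact card_monicDivisors_le_of_degSmooth (Nat.pow_log_le_self q (by positivity))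
            (by linarith) hρκ (two_rpow_neg_lt_one hε) hK hsmooth
    _ = divisorBoundConst ε * (q : ℝ) ^ (ε * (K * P).natDegree) := by
        rw [hK.natDegree_mul hP, mul_left_comm, ← pow_add, add_comm, hρ_def,
          ← Real.rpow_mul_natCast (by positivity)]

end DivisorBound

section Majorant

/-- `σ₋₁(K) = ∑ 1 / |h|`, over the monic divisors `h` of `K`, where `|h| = q ^ deg h`. -/
noncomputable def sigmaNegOne (K : Fq[X]) : ℝ := ∑ h ∈ monicDivisors K, ((q : ℝ) ^ h.natDegree)⁻¹

/-- The weight `w K / |K| * σ₋₁(K)` summed over the monic `K` of degree at most `y`: up to a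
factor, it bounds the average of `∑ w K`, over the divisors `K` of degree at most `y`, along the
solutions of the congruence. -/
noncomputable def majorantCost (y : ℕ) (w : Fq[X] → ℝ) : ℝ :=
  ∑ K ∈ monicsLE Fq y, w K * ((q : ℝ) ^ K.natDegree)⁻¹ * sigmaNegOne K

/-- The weight `c * t ^ deg K` on the `m`-smooth polynomials. -/
noncomputable def rankinWeight {R : Type*} [Field R] (m : ℕ) (c t : ℝ) (K : R[X]) : ℝ :=
  if DegSmooth m K then c * t ^ K.natDegree else 0

lemma one_le_sigmaNegOne {K : Fq[X]} (hK : K ≠ 0) : 1 ≤ sigmaNegOne K := by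
  calc (1 : ℝ) = ((q : ℝ) ^ (1 : Fq[X]).natDegree)⁻¹ := by simp
    _ ≤ sigmaNegOne K := single_le_sum (f := fun h : Fq[X] ↦ ((q : ℝ) ^ h.natDegree)⁻¹)
        (fun _ _ ↦ by positivity) (one_mem_monicDivisors hK)

lemma majorantCost_add (y : ℕ) (w w' : Fq[X] → ℝ) :
    majorantCost y (w + w') = majorantCost y w + majorantCost y w' := by
  simp [majorantCost, add_mul, sum_add_distrib]

lemma majorantCost_sum {ι : Type*} (s : Finset ι) (y : ℕ) (w : ι → Fq[X] → ℝ) :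
    majorantCost y (∑ j ∈ s, w j) = ∑ j ∈ s, majorantCost y (w j) := by
  simp_rw [majorantCost, Finset.sum_apply, sum_mul]
  exact sum_comm

lemma rankinWeight_nonneg {R : Type*} [Field R] (m : ℕ) {c t : ℝ} (hc : 0 ≤ c) (ht : 0 ≤ t)
    (K : R[X]) : 0 ≤ rankinWeight m c t K := by
  unfold rankinWeight
  split_ifs <;> positivity

lemma sum_factoredMonics_mul_sigmaNegOne_le (s : Finset Fq[X]) (y : ℕ) {v : ℝ} (hv : 0 ≤ v)
    (hv1 : v < 1) : ∑ K ∈ factoredMonics s y, v ^ K.natDegree * sigmaNegOne K ≤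
      (1 - v)⁻¹ * ∑ K ∈ factoredMonics s y, v ^ K.natDegree := by
  have hdivisors (K) (hK : K ∈ factoredMonics s y) :
      monicDivisors K ⊆ {h ∈ monicsLE Fq y | h ∣ K} := fun h hh ↦ by
    obtain ⟨hm, hy⟩ := (mem_factoredMonics.1 hK).1
    rw [mem_monicDivisors hm.ne_zero] at hh
    exact mem_filter.2
      ⟨mem_monicsLE.2 ⟨hh.1, (natDegree_le_of_dvd hh.2 hm.ne_zero).trans hy⟩, hh.2⟩
  calc ∑ K ∈ factoredMonics s y, v ^ K.natDegree * sigmaNegOne K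
      ≤ ∑ K ∈ factoredMonics s y,
          v ^ K.natDegree * ∑ h ∈ monicsLE Fq y with h ∣ K, ((q : ℝ) ^ h.natDegree)⁻¹ := by
        refine sum_le_sum fun K hK ↦ mul_le_mul_of_nonneg_left ?_ (by positivity)
        exact sum_le_sum_of_subset_of_nonneg (hdivisors K hK) fun _ _ _ ↦ by positivity
    _ = ∑ h ∈ monicsLE Fq y, ((q : ℝ) ^ h.natDegree)⁻¹ *
          ∑ K ∈ factoredMonics s y with h ∣ K, v ^ K.natDegree := by
        simp_rw [mul_sum, sum_filter]
        rw [sum_comm]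
        simp_rw [mul_comm]
    _ ≤ ∑ h ∈ monicsLE Fq y, ((q : ℝ) ^ h.natDegree)⁻¹ *
          (v ^ h.natDegree * ∑ K ∈ factoredMonics s y, v ^ K.natDegree) :=
        sum_le_sum fun h hh ↦ mul_le_mul_of_nonneg_left
          (sum_factoredMonics_dvd_le s y (mem_monicsLE.1 hh).1 hv) (by positivity)
    _ = (∑ h ∈ monicsLE Fq y, v ^ h.natDegree * ((q : ℝ) ^ h.natDegree)⁻¹) *
          ∑ K ∈ factoredMonics s y, v ^ K.natDegree := by
        rw [sum_mul]
        exact sum_congr rfl fun _ _ ↦ by ring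
    _ ≤ (1 - v)⁻¹ * ∑ K ∈ factoredMonics s y, v ^ K.natDegree :=
        mul_le_mul_of_nonneg_right (sum_monicsLE_pow_le y hv hv1)
          (sum_nonneg fun _ _ ↦ by positivity)

lemma majorantCost_rankinWeight_le (y m : ℕ) {c t T : ℝ} (hc : 0 ≤ c) (ht : 1 ≤ t)
    (hT : t ^ m ≤ T) (htq : t ^ 4 ≤ q) :
    majorantCost y (rankinWeight (R := Fq) m c t) ≤
      c * (5 / 2 * Real.exp (T + 6 * T ^ 2) * (m + 1)) := by
  have hq := two_le_card Fq
  set v : ℝ := t / q with hv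
  have hv0 : 0 ≤ v := by positivity
  have hv1 : v ≤ 3 / 5 := div_le_three_fifths hq htq
  have hsub : {K ∈ monicsLE Fq y | DegSmooth m K} ⊆ factoredMonics (irreduciblesLE Fq m) y :=
    fun K hK ↦ by
      rw [mem_filter, mem_monicsLE] at hK
      exact mem_factoredMonics_irreduciblesLE hK.1.1 hK.1.2 hK.2
  have hsigma (K) (hK : K ∈ factoredMonics (irreduciblesLE Fq m) y) : 0 ≤ sigmaNegOne K :=
    zero_le_one.trans (one_le_sigmaNegOne (mem_factoredMonics.1 hK).1.1.ne_zero)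
  calc majorantCost y (rankinWeight m c t)
      = c * ∑ K ∈ monicsLE Fq y with DegSmooth m K, v ^ K.natDegree * sigmaNegOne K := by
        rw [majorantCost, mul_sum, sum_filter]
        refine sum_congr rfl fun K _ ↦ ?_
        rw [rankinWeight]
        split_ifs
        · rw [hv, div_pow]
          ring
        · simp
    _ ≤ c * ∑ K ∈ factoredMonics (irreduciblesLE Fq m) y, v ^ K.natDegree * sigmaNegOne K :=
        mul_le_mul_of_nonneg_left (sum_le_sum_of_subset_of_nonneg hsub
          fun K hK _ ↦ mul_nonneg (by positivity) (hsigma K hK)) hc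
    _ ≤ c * ((1 - v)⁻¹ * ∏ p ∈ irreduciblesLE Fq m, (1 - v ^ p.natDegree)⁻¹) := by
        refine mul_le_mul_of_nonneg_left ((sum_factoredMonics_mul_sigmaNegOne_le _ y hv0
          (by linarith)).trans (mul_le_mul_of_nonneg_left ?_ (inv_nonneg.2 (by linarith)))) hc
        exact sum_factoredMonics_irreduciblesLE_le m y hv0 (by linarith)
    _ ≤ c * (5 / 2 * (Real.exp (T + 6 * T ^ 2) * (m + 1))) := by
        refine mul_le_mul_of_nonneg_left (mul_le_mul ?_
          (prod_irreduciblesLE_le_of_pow_le ht hT htq) (prod_nonneg fun p _ ↦ ?_) (by norm_num)) hc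
        · rw [inv_le_comm₀ (by linarith) (by norm_num)]
          linarith
        · exact inv_nonneg.2 (sub_nonneg.2 (pow_le_one₀ hv0 (by linarith)))
    _ = c * (5 / 2 * Real.exp (T + 6 * T ^ 2) * (m + 1)) := by ring

lemma mul_sum_monicDivisors_le_sum_rankinWeight {y m : ℕ} {c t : ℝ} (hc : 0 ≤ c) (ht : 0 ≤ t)
    {K N : Fq[X]} (hK : K.Monic) (hKN : K ∣ N) (hy : K.natDegree ≤ y) (hsmooth : DegSmooth m K) :
    c * ∑ D ∈ monicDivisors K, t ^ D.natDegree ≤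
      ∑ D ∈ monicsLE Fq y with D ∣ N, rankinWeight m c t D := by
  have hD (D) (hD : D ∈ monicDivisors K) : D.Monic ∧ D ∣ K := (mem_monicDivisors hK.ne_zero).1 hD
  rw [mul_sum, sum_congr rfl fun D hDK ↦ show c * t ^ D.natDegree = rankinWeight m c t D from
    (if_pos fun p hp h ↦ hsmooth p hp (h.trans (hD D hDK).2)).symm]
  refine sum_le_sum_of_subset_of_nonneg (fun D hDK ↦ ?_) fun D _ _ ↦ rankinWeight_nonneg m hc ht D
  obtain ⟨hm, hDK⟩ := hD D hDK
  exact mem_filter.2 ⟨mem_monicsLE.2 ⟨hm, (natDegree_le_of_dvd hDK hK.ne_zero).trans hy⟩,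
    hDK.trans hKN⟩

/-- Either few factors remain beyond the greedily chosen divisor `K`, or `K` is smooth relative to
its degree. -/
lemma exists_dvd_card_monicDivisors_le (k y : ℕ) {N : Fq[X]} (hN : N.Monic)
    (hdeg : N.natDegree ≤ k * y) :
    ∃ K : Fq[X], K.Monic ∧ K ∣ N ∧ K.natDegree ≤ y ∧
      (#(monicDivisors N) ≤ 4 ^ k * #(monicDivisors K) ∨
        ∃ m r, 0 < m ∧ 2 * k < r ∧ r * m ≤ k * y ∧ y ≤ 2 * K.natDegree ∧ DegSmooth m K ∧
          #(monicDivisors N) ≤ 2 ^ r * #(monicDivisors K)) := by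
  obtain ⟨K, P, hK, hP, rfl, hy, rfl | ⟨m, hm, hym, hsmooth, hrough⟩⟩ :=
    exists_greedy_factorization y hN
  · refine ⟨K, hK, dvd_mul_right K 1, hy, .inl ?_⟩
    rw [mul_one]
    exact Nat.le_mul_of_pos_left _ (by positivity)
  refine ⟨K, hK, dvd_mul_right K P, hy, ?_⟩
  have hcard := card_monicDivisors_mul_le_of_degRough hm hP hK.ne_zero hrough
  rcases le_or_gt (P.natDegree / m) (2 * k) with hr | hr
  · left
    refine hcard.trans (Nat.mul_le_mul_right _ ?_)
    exact (Nat.pow_le_pow_right two_pos hr).trans_eq (pow_mul 2 2 k)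
  · right
    have hrm : P.natDegree / m * m ≤ k * y := by
      rw [hK.natDegree_mul hP] at hdeg
      exact (Nat.div_mul_le_self _ m).trans (by omega)
    have hmy : 2 * m ≤ y := by nlinarith
    exact ⟨m, P.natDegree / m, hm, hr, hrm, by omega, hsmooth, hcard⟩

variable (Fq) in
/-- A majorant for the divisor function on the monic polynomials of degree at most `k * y`: by
`card_monicDivisors_le_sum_divisorMajorant`, its sum over the divisors of degree at most `y` of such
a polynomial `N` is at least the number of divisors of `N`. The three terms serve the `N` with few
prime factors outside a divisor of degree at most `y`, the `N` whose such divisor has only prime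
factors of bounded size, and the remaining `N`, sorted by the number `r` of prime factors left. -/
noncomputable def divisorMajorant (k y : ℕ) : Fq[X] → ℝ :=
  rankinWeight y (4 ^ k) 1 +
    rankinWeight (Nat.log q (2 ^ (32 * k))) (divisorBoundConst (1 / (8 * (k + 1))))
      ((q : ℝ) ^ (1 / 4 : ℝ)) +
    ∑ r ∈ Icc 1 (k * y) with 2 ^ (32 * r) ≤ q ^ y,
      rankinWeight (k * y / r) ((1 / 2) ^ r) (2 ^ (8 * r / y : ℝ))

/-- The constant in the bound for the cost of `divisorMajorant k y`. -/
noncomputable def divisorMajorantConst (k : ℕ) : ℝ :=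
  5 / 2 * Real.exp (2 ^ (8 * k) + 6 * (2 ^ (8 * k)) ^ 2) *
    (4 ^ k + divisorBoundConst (1 / (8 * (k + 1))) * (32 * k + 1) + 2 * (k + 1))

lemma divisorBoundConst_nat_pos (k : ℕ) : 0 < divisorBoundConst (1 / (8 * (k + 1))) :=
  divisorBoundConst_pos (by positivity)

lemma divisorMajorantConst_pos (k : ℕ) : 0 < divisorMajorantConst k := by
  have := divisorBoundConst_nat_pos k
  unfold divisorMajorantConst
  positivity

lemma one_le_card_rpow_quarter : 1 ≤ (q : ℝ) ^ (1 / 4 : ℝ) :=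
  Real.one_le_rpow (by linarith [two_le_card Fq]) (by norm_num)

lemma divisorMajorant_nonneg (k y : ℕ) (K : Fq[X]) : 0 ≤ divisorMajorant Fq k y K := by
  have hconst := (divisorBoundConst_nat_pos k).le
  have ht := zero_le_one.trans (one_le_card_rpow_quarter (Fq := Fq))
  rw [divisorMajorant, Pi.add_apply, Pi.add_apply, Finset.sum_apply]
  exact add_nonneg (add_nonneg (rankinWeight_nonneg _ (by positivity) zero_le_one K)
    (rankinWeight_nonneg _ hconst ht K))
    (sum_nonneg fun r _ ↦ rankinWeight_nonneg _ (by positivity) (by positivity) K)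

lemma sum_le_sum_divisorMajorant (k y : ℕ) (S : Finset Fq[X]) :
    ∑ K ∈ S, rankinWeight y (4 ^ k) 1 K ≤ ∑ K ∈ S, divisorMajorant Fq k y K ∧
    ∑ K ∈ S, rankinWeight (Nat.log q (2 ^ (32 * k))) (divisorBoundConst (1 / (8 * (k + 1))))
      ((q : ℝ) ^ (1 / 4 : ℝ)) K ≤ ∑ K ∈ S, divisorMajorant Fq k y K ∧
    ∀ r ∈ Icc 1 (k * y), 2 ^ (32 * r) ≤ q ^ y →
      ∑ K ∈ S, rankinWeight (k * y / r) ((1 / 2) ^ r) (2 ^ (8 * r / y : ℝ)) K ≤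
        ∑ K ∈ S, divisorMajorant Fq k y K := by
  have hconst := (divisorBoundConst_nat_pos k).le
  have hbase := zero_le_one.trans (one_le_card_rpow_quarter (Fq := Fq))
  have hfew (K : Fq[X]) : 0 ≤ rankinWeight y (4 ^ k) 1 K :=
    rankinWeight_nonneg _ (by positivity) zero_le_one K
  have hsmall (K : Fq[X]) := rankinWeight_nonneg (Nat.log q (2 ^ (32 * k))) hconst hbase K
  have hmany (r : ℕ) (K : Fq[X]) :
      0 ≤ rankinWeight (k * y / r) ((1 / 2) ^ r) (2 ^ (8 * r / y : ℝ)) K :=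
    rankinWeight_nonneg _ (by positivity) (by positivity) K
  have hsum (K : Fq[X]) := sum_nonneg
    (s := {r ∈ Icc 1 (k * y) | 2 ^ (32 * r) ≤ q ^ y}) fun r _ ↦ hmany r K
  simp only [divisorMajorant, Pi.add_apply, Finset.sum_apply]
  refine ⟨sum_le_sum fun K _ ↦ ?_, sum_le_sum fun K _ ↦ ?_, fun r hr hrq ↦ sum_le_sum fun K _ ↦ ?_⟩
  · linarith [hsmall K, hsum K]
  · linarith [hfew K, hsum K]
  · have := single_le_sum (f := fun r ↦ rankinWeight (k * y / r) ((1 / 2) ^ r)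
      (2 ^ (8 * r / y : ℝ)) K) (fun r _ ↦ hmany r K)
      (mem_filter (p := fun r ↦ 2 ^ (32 * r) ≤ q ^ y).2 ⟨hr, hrq⟩)
    linarith [hfew K, hsmall K]

lemma rpow_mul_div_pow_le {b : ℕ} {r y n : ℕ} (h : r * n ≤ b * y) :
    ((2 : ℝ) ^ (8 * r / y : ℝ)) ^ n ≤ 2 ^ (8 * b) := by
  rw [← Real.rpow_mul_natCast zero_le_two, ← Real.rpow_natCast]
  refine Real.rpow_le_rpow_of_exponent_le one_le_two ?_
  have h' : (r * n : ℝ) ≤ b * y := mod_cast h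
  rw [div_mul_eq_mul_div]
  refine div_le_of_le_mul₀ (by positivity) (by positivity) ?_
  push_cast
  linarith

lemma rpow_mul_div_pow_four_le {r y : ℕ} (hr : 2 ^ (32 * r) ≤ q ^ y) (hy : y ≠ 0) :
    ((2 : ℝ) ^ (8 * r / y : ℝ)) ^ 4 ≤ q := by
  refine le_of_pow_le_pow_left₀ hy (by positivity) ?_
  have hy' : (y : ℝ) ≠ 0 := mod_cast hy
  calc (((2 : ℝ) ^ (8 * r / y : ℝ)) ^ 4) ^ y = 2 ^ (32 * r) := by
        rw [← pow_mul, ← Real.rpow_mul_natCast zero_le_two, ← Real.rpow_natCast]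
        congr 1
        push_cast
        field_simp
        ring
    _ ≤ (q : ℝ) ^ y := mod_cast hr

lemma rpow_quarter_pow_log_le (k : ℕ) :
    ((q : ℝ) ^ (1 / 4 : ℝ)) ^ Nat.log q (2 ^ (32 * k)) ≤ 2 ^ (8 * k) := by
  have hpow : (q : ℝ) ^ Nat.log q (2 ^ (32 * k)) ≤ 2 ^ (32 * k) :=
    mod_cast Nat.pow_log_le_self q (by positivity)
  calc ((q : ℝ) ^ (1 / 4 : ℝ)) ^ Nat.log q (2 ^ (32 * k))
      = ((q : ℝ) ^ Nat.log q (2 ^ (32 * k))) ^ (1 / 4 : ℝ) :=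
        Real.rpow_pow_comm (by positivity) _ _
    _ ≤ ((2 : ℝ) ^ (32 * k)) ^ (1 / 4 : ℝ) :=
        Real.rpow_le_rpow (by positivity) hpow (by norm_num)
    _ = 2 ^ (8 * k) := by
        rw [← Real.rpow_natCast_mul zero_le_two, ← Real.rpow_natCast]
        congr 1
        push_cast
        ring

lemma majorantCost_small_le (k y : ℕ) {c T : ℝ} (hc : 0 ≤ c) (hT : T = 2 ^ (8 * k)) :
    majorantCost (Fq := Fq) y (rankinWeight (Nat.log q (2 ^ (32 * k))) c
      ((q : ℝ) ^ (1 / 4 : ℝ))) ≤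
      c * (5 / 2 * Real.exp (T + 6 * T ^ 2) * ((32 * k + 1) * (y + 1))) := by
  have hlog : (Nat.log q (2 ^ (32 * k)) : ℝ) ≤ 32 * k := mod_cast
    (Nat.log_anti_left one_lt_two Fintype.one_lt_card).trans_eq (Nat.log_pow one_lt_two _)
  have hroot : ((q : ℝ) ^ (1 / 4 : ℝ)) ^ 4 ≤ q := by
    rw [← Real.rpow_mul_natCast (by positivity)]
    norm_num
  refine (majorantCost_rankinWeight_le y _ hc one_le_card_rpow_quarter
    ((rpow_quarter_pow_log_le k).trans_eq hT.symm) hroot).trans ?_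
  gcongr
  nlinarith [k.cast_nonneg (α := ℝ), y.cast_nonneg (α := ℝ)]

lemma majorantCost_many_le {k y r : ℕ} {T : ℝ} (hT : T = 2 ^ (8 * k)) (hy : y ≠ 0)
    (hrq : 2 ^ (32 * r) ≤ q ^ y) :
    majorantCost (Fq := Fq) y
      (rankinWeight (k * y / r) ((1 / 2) ^ r) (2 ^ (8 * r / y : ℝ))) ≤
      (1 / 2) ^ r * (5 / 2 * Real.exp (T + 6 * T ^ 2) * ((k + 1) * (y + 1))) := by
  have hdiv : ((k * y / r : ℕ) : ℝ) ≤ k * y := mod_cast Nat.div_le_self _ _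
  refine (majorantCost_rankinWeight_le y _ (by positivity)
    (Real.one_le_rpow one_le_two (by positivity))
    ((rpow_mul_div_pow_le (Nat.mul_div_le _ _)).trans_eq hT.symm)
    (rpow_mul_div_pow_four_le hrq hy)).trans ?_
  gcongr
  nlinarith [k.cast_nonneg (α := ℝ), y.cast_nonneg (α := ℝ)]

theorem majorantCost_divisorMajorant_le (k y : ℕ) :
    majorantCost y (divisorMajorant Fq k y) ≤ divisorMajorantConst k * (y + 1) := by
  obtain ⟨T, hT⟩ : ∃ T : ℝ, T = 2 ^ (8 * k) := ⟨_, rfl⟩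
  set E : ℝ := 5 / 2 * Real.exp (T + 6 * T ^ 2)
  have hfew : majorantCost (Fq := Fq) y (rankinWeight y (4 ^ k) 1) ≤ 4 ^ k * (E * (y + 1)) :=
    majorantCost_rankinWeight_le y y (by positivity) le_rfl
      (by rw [one_pow, hT]; exact one_le_pow₀ one_le_two)
      (by rw [one_pow]; linarith [two_le_card Fq])
  have hmany : ∑ r ∈ Icc 1 (k * y) with 2 ^ (32 * r) ≤ q ^ y, majorantCost (Fq := Fq) y
      (rankinWeight (k * y / r) ((1 / 2) ^ r) (2 ^ (8 * r / y : ℝ))) ≤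
        2 * (E * ((k + 1) * (y + 1))) := by
    have hgeom : ∑ r ∈ Icc 1 (k * y) with 2 ^ (32 * r) ≤ q ^ y, ((1 : ℝ) / 2) ^ r ≤ 2 :=
      (sum_le_sum_of_subset_of_nonneg (fun r hr ↦ mem_range_succ_iff.2
        (mem_Icc.1 (mem_filter.1 hr).1).2) fun _ _ _ ↦ by positivity).trans (sum_geometric_two_le _)
    refine (sum_le_sum fun r hr ↦ ?_).trans ((sum_mul ..).symm.trans_le
      (mul_le_mul_of_nonneg_right hgeom (by positivity)))
    obtain ⟨hr, hrq⟩ := mem_filter.1 hr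
    refine majorantCost_many_le hT ?_ hrq
    rintro rfl
    simp at hr
  calc majorantCost y (divisorMajorant Fq k y)
      ≤ 4 ^ k * (E * (y + 1)) +
          divisorBoundConst (1 / (8 * (k + 1))) * (E * ((32 * k + 1) * (y + 1))) +
          2 * (E * ((k + 1) * (y + 1))) := by
        rw [divisorMajorant, majorantCost_add, majorantCost_add, majorantCost_sum]
        exact add_le_add (add_le_add hfew
          (majorantCost_small_le k y (divisorBoundConst_nat_pos k).le hT)) hmany
    _ = divisorMajorantConst k * (y + 1) := by
        rw [divisorMajorantConst, ← hT]
        ring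

lemma two_pow_mul_card_monicDivisors_le {r y : ℕ} {K : Fq[X]} (hK : K.Monic) (hy : y ≠ 0)
    (hyK : y ≤ 2 * K.natDegree) :
    2 ^ r * (#(monicDivisors K) : ℝ) ≤
      (1 / 2) ^ r * ∑ D ∈ monicDivisors K, ((2 : ℝ) ^ (8 * r / y : ℝ)) ^ D.natDegree := by
  have hsq : ((2 : ℝ) ^ (4 * r / y : ℝ)) ^ 2 = 2 ^ (8 * r / y : ℝ) := by
    rw [← Real.rpow_mul_natCast zero_le_two]
    congr 1
    push_cast
    ring
  have hpow : (2 : ℝ) ^ (2 * r) ≤ ((2 : ℝ) ^ (4 * r / y : ℝ)) ^ K.natDegree := by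
    rw [← Real.rpow_mul_natCast zero_le_two, ← Real.rpow_natCast]
    refine Real.rpow_le_rpow_of_exponent_le one_le_two ?_
    have hyK' : (y : ℝ) ≤ 2 * K.natDegree := mod_cast hyK
    rw [div_mul_eq_mul_div, le_div_iff₀ (by positivity)]
    push_cast
    nlinarith [r.cast_nonneg (α := ℝ)]
  calc (2 : ℝ) ^ r * #(monicDivisors K) = (1 / 2) ^ r * (#(monicDivisors K) * 2 ^ (2 * r)) := by
        rw [two_mul, pow_add, one_div_pow]
        field_simp
    _ ≤ (1 / 2) ^ r * ∑ D ∈ monicDivisors K, ((2 : ℝ) ^ (8 * r / y : ℝ)) ^ D.natDegree := by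
        rw [← hsq]
        gcongr
        exact (mul_le_mul_of_nonneg_left hpow (by positivity)).trans
          (card_monicDivisors_mul_pow_le hK _)

lemma card_monicDivisors_le_sum_rpow_quarter {k y : ℕ} {K N : Fq[X]} (hN : N.Monic) (hK : K.Monic)
    (hdeg : N.natDegree ≤ k * y) (hyK : y ≤ 2 * K.natDegree) :
    (#(monicDivisors N) : ℝ) ≤ divisorBoundConst (1 / (8 * (k + 1))) *
      ∑ D ∈ monicDivisors K, ((q : ℝ) ^ (1 / 4 : ℝ)) ^ D.natDegree := by
  have hq := two_le_card Fq
  have hexp : 1 / (8 * (k + 1)) * (N.natDegree : ℝ) ≤ 1 / 4 * K.natDegree := by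
    have hdeg' : (N.natDegree : ℝ) ≤ k * y := mod_cast hdeg
    have hyK' : (y : ℝ) ≤ 2 * K.natDegree := mod_cast hyK
    rw [one_div_mul_eq_div, div_le_iff₀ (by positivity)]
    nlinarith [k.cast_nonneg (α := ℝ)]
  refine (card_monicDivisors_le_rpow (by positivity) hN).trans
    (mul_le_mul_of_nonneg_left ?_ (divisorBoundConst_nat_pos k).le)
  calc (q : ℝ) ^ (1 / (8 * (k + 1)) * (N.natDegree : ℝ)) ≤ (q : ℝ) ^ (1 / 4 * K.natDegree : ℝ) :=
        Real.rpow_le_rpow_of_exponent_le (by linarith) hexp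
    _ = ((q : ℝ) ^ (1 / 4 : ℝ)) ^ K.natDegree := Real.rpow_mul_natCast (by positivity) _ _
    _ ≤ ∑ D ∈ monicDivisors K, ((q : ℝ) ^ (1 / 4 : ℝ)) ^ D.natDegree :=
        single_le_sum (f := fun D : Fq[X] ↦ ((q : ℝ) ^ (1 / 4 : ℝ)) ^ D.natDegree)
          (fun _ _ ↦ by positivity) ((mem_monicDivisors hK.ne_zero).2 ⟨hK, dvd_rfl⟩)

lemma le_log_of_pow_lt {b k y m r : ℕ} (hb : 1 < b) (hr : r ≠ 0) (hrm : r * m ≤ k * y)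
    (hby : b ^ y < 2 ^ (32 * r)) : m ≤ Nat.log b (2 ^ (32 * k)) := by
  refine Nat.le_log_of_pow_le hb ((Nat.pow_le_pow_iff_left hr).1 ?_)
  calc (b ^ m) ^ r = b ^ (r * m) := by rw [← pow_mul, mul_comm]
    _ ≤ (b ^ y) ^ k := by
        rw [← pow_mul, mul_comm y]
        exact Nat.pow_le_pow_right hb.le hrm
    _ ≤ (2 ^ (32 * r)) ^ k := Nat.pow_le_pow_left hby.le k
    _ = (2 ^ (32 * k)) ^ r := by
        rw [← pow_mul, ← pow_mul]
        congr 1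
        ring

theorem card_monicDivisors_le_sum_divisorMajorant (k y : ℕ) {N : Fq[X]} (hN : N.Monic)
    (hdeg : N.natDegree ≤ k * y) :
    #(monicDivisors N) ≤ ∑ K ∈ monicsLE Fq y with K ∣ N, divisorMajorant Fq k y K := by
  obtain ⟨hfew, hsmall, hmany⟩ :=
    sum_le_sum_divisorMajorant k y {K ∈ monicsLE Fq y | K ∣ N}
  obtain ⟨K, hK, hKN, hy, hcard | ⟨m, r, hm, hkr, hrm, hyK, hsmooth, hcard⟩⟩ :=
    exists_dvd_card_monicDivisors_le k y hN hdeg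
  · refine le_trans ?_ ((mul_sum_monicDivisors_le_sum_rankinWeight (by positivity) zero_le_one hK
      hKN hy fun p _ h ↦ (natDegree_le_of_dvd h hK.ne_zero).trans hy).trans hfew)
    simpa using mod_cast hcard
  have hr : 0 < r := by omega
  have hrk : r ≤ k * y := (Nat.le_mul_of_pos_right r hm).trans hrm
  have hy0 : y ≠ 0 := by rintro rfl; omega
  rcases le_or_gt (2 ^ (32 * r)) (q ^ y) with hrq | hrq
  · have hsmooth' : DegSmooth (k * y / r) K := fun p hp h ↦
      (hsmooth p hp h).trans ((Nat.le_div_iff_mul_le hr).2 (by rwa [mul_comm]))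
    calc (#(monicDivisors N) : ℝ) ≤ 2 ^ r * #(monicDivisors K) := mod_cast hcard
      _ ≤ (1 / 2) ^ r * ∑ D ∈ monicDivisors K, ((2 : ℝ) ^ (8 * r / y : ℝ)) ^ D.natDegree :=
          two_pow_mul_card_monicDivisors_le hK hy0 hyK
      _ ≤ ∑ K ∈ monicsLE Fq y with K ∣ N, divisorMajorant Fq k y K :=
          (mul_sum_monicDivisors_le_sum_rankinWeight (by positivity) (by positivity) hK hKN hy
            hsmooth').trans (hmany r (mem_Icc.2 ⟨hr, hrk⟩) hrq)
  · have hsmooth' : DegSmooth (Nat.log q (2 ^ (32 * k))) K := fun p hp h ↦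
      (hsmooth p hp h).trans (le_log_of_pow_lt Fintype.one_lt_card hr.ne' hrm hrq)
    exact (card_monicDivisors_le_sum_rpow_quarter hN hK hdeg hyK).trans
      ((mul_sum_monicDivisors_le_sum_rankinWeight (divisorBoundConst_nat_pos k).le (by positivity)
        hK hKN hy hsmooth').trans hsmall)

end Majorant

lemma card_image_le_pow_of_dvd_sub {ι : Type*} {S : Finset ι} {g : ι → Fq[X]} {G : Fq[X]}
    (hG : G ≠ 0) {n : ℕ} (hdvd : ∀ x ∈ S, ∀ x' ∈ S, G ∣ g x - g x')
    (hdeg : ∀ x ∈ S, ∀ x' ∈ S, (g x - g x').degree < n) :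
    #(S.image g) ≤ q ^ (n - G.natDegree) := by
  refine card_le_pow_of_dvd_sub hG ?_ ?_ <;> simpa only [forall_mem_image]

lemma card_le_pow_mul_card_image {ι κ : Type*} [DecidableEq κ] {S : Finset ι} (f : ι → κ)
    (g : ι → Fq[X]) {G : Fq[X]} (hG : G ≠ 0) {n : ℕ}
    (hinj : ∀ x ∈ S, ∀ x' ∈ S, f x = f x' → g x = g x' → x = x')
    (hdvd : ∀ x ∈ S, ∀ x' ∈ S, f x = f x' → G ∣ g x - g x')
    (hdeg : ∀ x ∈ S, ∀ x' ∈ S, (g x - g x').degree < n) :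
    #S ≤ q ^ (n - G.natDegree) * #(S.image f) := by
  refine card_le_mul_card_image S _ fun k _ ↦ ?_
  have hfiber (x) (hx : x ∈ S.filter (f · = k)) : x ∈ S ∧ f x = k := mem_filter.1 hx
  rw [← card_image_of_injOn (f := g) fun x hx x' hx' ↦ hinj x (hfiber x hx).1 x' (hfiber x' hx').1
    ((hfiber x hx).2.trans (hfiber x' hx').2.symm)]
  exact card_image_le_pow_of_dvd_sub hG
    (fun x hx x' hx' ↦ hdvd x (hfiber x hx).1 x' (hfiber x' hx').1
      ((hfiber x hx).2.trans (hfiber x' hx').2.symm))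
    fun x hx x' hx' ↦ hdeg x (hfiber x hx).1 x' (hfiber x' hx').1

section OffDiagonal

/-- The quadruples counted in the theorem, with prescribed degrees `α`, `β`, `γ`, `δ`. -/
noncomputable def offDiagonal (F : Fq[X]) (a : Fq) (α β γ δ : ℕ) :
    Finset (Fq[X] × Fq[X] × Fq[X] × Fq[X]) :=
  {t ∈ monicsOfDegree Fq α ×ˢ monicsOfDegree Fq β ×ˢ monicsOfDegree Fq γ ×ˢ monicsOfDegree Fq δ |
    IsCoprime (t.1 * t.2.1 * t.2.2.1 * t.2.2.2) F ∧
      F ∣ t.1 * t.2.2.1 - C a * (t.2.1 * t.2.2.2) ∧ t.1 * t.2.2.1 ≠ t.2.1 * t.2.2.2}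

/-- The triples `(B, D, N)` of monic polynomials of degrees `β`, `δ`, `i`, coprime to `F`, with
`N ≡ a B D` modulo `F` and `N ≠ B D`. A quadruple of the theorem is such a triple together with a
factorization `N = A C`. -/
noncomputable def congruenceTriples (F : Fq[X]) (a : Fq) (i β δ : ℕ) :
    Finset (Fq[X] × Fq[X] × Fq[X]) :=
  {x ∈ monicsOfDegree Fq β ×ˢ monicsOfDegree Fq δ ×ˢ monicsOfDegree Fq i |
    IsCoprime (x.1 * x.2.1 * x.2.2) F ∧ F ∣ x.2.2 - C a * (x.1 * x.2.1) ∧ x.2.2 ≠ x.1 * x.2.1}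

/-- The polynomial `L` with `N = a B D + L F`, for `x = (B, D, N)` in `congruenceTriples`. -/
noncomputable def congruenceQuotient (F : Fq[X]) (a : Fq) (x : Fq[X] × Fq[X] × Fq[X]) : Fq[X] :=
  (x.2.2 - C a * (x.1 * x.2.1)) / F

lemma mem_offDiagonal {F : Fq[X]} {a : Fq} {α β γ δ : ℕ} {A B C D : Fq[X]} :
    (A, B, C, D) ∈ offDiagonal F a α β γ δ ↔
      (A ∈ monicsOfDegree Fq α ∧ B ∈ monicsOfDegree Fq β ∧ C ∈ monicsOfDegree Fq γ ∧
        D ∈ monicsOfDegree Fq δ) ∧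
      IsCoprime (A * B * C * D) F ∧ F ∣ A * C - Polynomial.C a * (B * D) ∧ A * C ≠ B * D := by
  simp only [offDiagonal, mem_filter, mem_product]

lemma mem_congruenceTriples {F : Fq[X]} {a : Fq} {i β δ : ℕ} {x : Fq[X] × Fq[X] × Fq[X]} :
    x ∈ congruenceTriples F a i β δ ↔
      (x.1 ∈ monicsOfDegree Fq β ∧ x.2.1 ∈ monicsOfDegree Fq δ ∧ x.2.2 ∈ monicsOfDegree Fq i) ∧
      IsCoprime (x.1 * x.2.1 * x.2.2) F ∧ F ∣ x.2.2 - C a * (x.1 * x.2.1) ∧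
        x.2.2 ≠ x.1 * x.2.1 := by
  simp only [congruenceTriples, mem_filter, mem_product]

lemma card_offDiagonal_le_inv (F : Fq[X]) {a : Fq} (ha : a ≠ 0) (α β γ δ : ℕ) :
    #(offDiagonal F a α β γ δ) ≤ #(offDiagonal F a⁻¹ β α δ γ) := by
  refine card_le_card_of_injOn (fun t ↦ (t.2.1, t.1, t.2.2.2, t.2.2.1)) ?_ ?_
  · rintro ⟨A, B, C, D⟩ h
    rw [mem_coe, mem_offDiagonal] at h ⊢
    obtain ⟨⟨hA, hB, hC, hD⟩, hco, hdvd, hne⟩ := h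
    refine ⟨⟨hB, hA, hD, hC⟩, by convert hco using 1; ring, ?_, hne.symm⟩
    have hinv : Polynomial.C a⁻¹ * Polynomial.C a = 1 := by rw [← C_mul, inv_mul_cancel₀ ha, C_1]
    convert hdvd.mul_left (-Polynomial.C a⁻¹) using 1
    linear_combination (-(B * D)) * hinv
  · rintro ⟨A, B, C, D⟩ _ ⟨A₂, B₂, C₂, D₂⟩ _ h
    simp only [Prod.mk.injEq] at h ⊢
    tauto

lemma card_offDiagonal_le_comm (F : Fq[X]) (a : Fq) (α β γ δ : ℕ) :
    #(offDiagonal F a α β γ δ) ≤ #(offDiagonal F a γ δ α β) := by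
  refine card_le_card_of_injOn (fun t ↦ (t.2.2.1, t.2.2.2, t.1, t.2.1)) ?_ ?_
  · rintro ⟨A, B, C, D⟩ h
    rw [mem_coe, mem_offDiagonal] at h ⊢
    obtain ⟨⟨hA, hB, hC, hD⟩, hco, hdvd, hne⟩ := h
    rw [mul_comm C A, mul_comm D B]
    exact ⟨⟨hC, hD, hA, hB⟩, by convert hco using 1; ring, hdvd, hne⟩
  · rintro ⟨A, B, C, D⟩ _ ⟨A₂, B₂, C₂, D₂⟩ _ h
    simp only [Prod.mk.injEq] at h ⊢
    tauto

lemma card_offDiagonal_le_sum (F : Fq[X]) (a : Fq) (α β γ δ : ℕ) :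
    #(offDiagonal F a α β γ δ) ≤
      ∑ x ∈ congruenceTriples F a (α + γ) β δ, #(monicDivisors x.2.2) := by
  rw [← card_sigma]
  refine card_le_card_of_injOn (fun t ↦ ⟨(t.2.1, t.2.2.2, t.1 * t.2.2.1), t.1⟩) ?_ ?_
  · rintro ⟨A, B, C, D⟩ h
    obtain ⟨⟨hA, hB, hC, hD⟩, hco, hdvd, hne⟩ := mem_offDiagonal.1 h
    have hAC := mul_mem_monicsOfDegree hA hC
    rw [mem_coe, mem_sigma, mem_congruenceTriples,
      mem_monicDivisors (mem_monicsOfDegree.1 hAC).1.ne_zero]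
    exact ⟨⟨⟨hB, hD, hAC⟩, by convert hco using 1; ring, hdvd, hne⟩, (mem_monicsOfDegree.1 hA).1,
      dvd_mul_right A C⟩
  · rintro ⟨A, B, C, D⟩ h ⟨A₂, B₂, C₂, D₂⟩ _ heq
    simp only [Sigma.mk.injEq, Prod.mk.injEq, heq_eq_eq] at heq
    obtain ⟨⟨rfl, rfl, hAC⟩, rfl⟩ := heq
    have hA := (mem_monicsOfDegree.1 (mem_offDiagonal.1 h).1.1).1.ne_zero
    rw [mul_left_cancel₀ hA hAC]

lemma sum_card_monicDivisors_le {ι : Type*} {U : Finset ι} {N : ι → Fq[X]} {y : ℕ}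
    {w : Fq[X] → ℝ} {M : ℝ} (hw : ∀ K, 0 ≤ w K)
    (hmaj : ∀ x ∈ U, #(monicDivisors (N x)) ≤ ∑ K ∈ monicsLE Fq y with K ∣ N x, w K)
    (hcount : ∀ K ∈ monicsLE Fq y,
      #{x ∈ U | K ∣ N x} ≤ M * (((q : ℝ) ^ K.natDegree)⁻¹ * sigmaNegOne K)) :
    ∑ x ∈ U, (#(monicDivisors (N x)) : ℝ) ≤ M * majorantCost y w := by
  calc ∑ x ∈ U, (#(monicDivisors (N x)) : ℝ)
      ≤ ∑ x ∈ U, ∑ K ∈ monicsLE Fq y with K ∣ N x, w K := sum_le_sum hmaj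
    _ = ∑ K ∈ monicsLE Fq y, w K * #{x ∈ U | K ∣ N x} := by
        simp_rw [sum_filter]
        rw [sum_comm]
        refine sum_congr rfl fun K _ ↦ ?_
        rw [← sum_filter, sum_const, nsmul_eq_mul, mul_comm]
    _ ≤ ∑ K ∈ monicsLE Fq y, w K * (M * (((q : ℝ) ^ K.natDegree)⁻¹ * sigmaNegOne K)) :=
        sum_le_sum fun K hK ↦ mul_le_mul_of_nonneg_left (hcount K hK) (hw K)
    _ = M * majorantCost y w := by
        rw [majorantCost, mul_sum]
        exact sum_congr rfl fun _ _ ↦ by ring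

lemma card_congruenceTriples_dvd_mul_le_of_add_le {F : Fq[X]} (hF : F ≠ 0) (a : Fq) {i : ℕ}
    (β δ : ℕ) {K : Fq[X]} (hK : K ≠ 0) (hi : K.natDegree + F.natDegree ≤ i) :
    #{x ∈ congruenceTriples F a i β δ | K ∣ x.2.2} * q ^ (F.natDegree + K.natDegree) ≤
      q ^ (i + β + δ) := by
  set V := {x ∈ congruenceTriples F a i β δ | K ∣ x.2.2}
  have hV (x) (hx : x ∈ V) := mem_congruenceTriples.1 (mem_filter.1 hx).1
  have hKV (x) (hx : x ∈ V) : K ∣ x.2.2 := (mem_filter.1 hx).2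
  have hfiber : #V ≤ q ^ (i - (K * F).natDegree) * #(V.image fun x ↦ (x.1, x.2.1)) := by
    refine card_le_pow_mul_card_image (S := V) (fun x ↦ (x.1, x.2.1)) (fun x ↦ x.2.2)
      (mul_ne_zero hK hF) (fun _ _ _ _ hBD hN ↦ ?_) (fun x hx x' hx' hBD ↦ ?_)
      fun x hx x' hx' ↦ ?_
    · exact Prod.ext (Prod.mk.inj hBD).1 (Prod.ext (Prod.mk.inj hBD).2 hN)
    · obtain ⟨hB, hD⟩ := Prod.mk.inj hBD
      have hco : IsCoprime K F :=
        (hV x hx).2.1.of_mul_left_right.of_isCoprime_of_dvd_left (hKV x hx)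
      refine hco.mul_dvd (dvd_sub (hKV x hx) (hKV x' hx')) ?_
      have hsub := dvd_sub (hV x hx).2.2.1 (hV x' hx').2.2.1
      rwa [hB, hD, sub_sub_sub_cancel_right] at hsub
    · exact degree_sub_lt_of_mem_monicsOfDegree (hV x hx).1.2.2 (hV x' hx').1.2.2
  have himage : #(V.image fun x ↦ (x.1, x.2.1)) ≤ q ^ β * q ^ δ := by
    refine (card_le_card (image_subset_iff.2 fun x hx ↦ ?_)).trans ((card_product _ _).trans_le
      (Nat.mul_le_mul (card_monicsOfDegree_le β) (card_monicsOfDegree_le δ)))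
    exact mem_product.2 ⟨(hV x hx).1.1, (hV x hx).1.2.1⟩
  calc #V * q ^ (F.natDegree + K.natDegree)
      ≤ q ^ (i - (K * F).natDegree) * (q ^ β * q ^ δ) * q ^ (F.natDegree + K.natDegree) :=
        Nat.mul_le_mul_right _ (hfiber.trans (Nat.mul_le_mul_left _ himage))
    _ = q ^ (i + β + δ) := by
        rw [natDegree_mul hK hF, ← pow_add, ← pow_add, ← pow_add]
        congr 1
        omega

lemma congruenceQuotient_mul {F : Fq[X]} (hF : F ≠ 0) {a : Fq} {i β δ : ℕ}
    {x : Fq[X] × Fq[X] × Fq[X]} (hx : x ∈ congruenceTriples F a i β δ) :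
    congruenceQuotient F a x * F = x.2.2 - C a * (x.1 * x.2.1) := by
  rw [mul_comm]
  exact EuclideanDomain.mul_div_cancel' hF (mem_congruenceTriples.1 hx).2.2.1

lemma congruenceQuotient_ne_zero {F : Fq[X]} (hF : F ≠ 0) {a : Fq} {i β δ : ℕ}
    {x : Fq[X] × Fq[X] × Fq[X]} (hx : x ∈ congruenceTriples F a i β δ) :
    congruenceQuotient F a x ≠ 0 := by
  intro h0
  obtain ⟨⟨hB, hD, hN⟩, -, -, hne⟩ := mem_congruenceTriples.1 hx
  have heq := congruenceQuotient_mul hF hx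
  rw [h0, zero_mul, eq_comm, sub_eq_zero] at heq
  have hBD := (mem_monicsOfDegree.1 (mul_mem_monicsOfDegree hB hD)).1
  have ha := congrArg leadingCoeff heq
  rw [(mem_monicsOfDegree.1 hN).1.leadingCoeff, leadingCoeff_mul, leadingCoeff_C,
    hBD.leadingCoeff, mul_one] at ha
  rw [← ha, C_1, one_mul] at heq
  exact hne heq

lemma natDegree_congruenceQuotient_add_le {F : Fq[X]} (hF : F ≠ 0) {a : Fq} {i β δ : ℕ}
    (hi : β + δ ≤ i) {x : Fq[X] × Fq[X] × Fq[X]} (hx : x ∈ congruenceTriples F a i β δ) :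
    (congruenceQuotient F a x).natDegree + F.natDegree ≤ i := by
  obtain ⟨⟨hB, hD, hN⟩, -⟩ := mem_congruenceTriples.1 hx
  rw [← natDegree_mul (congruenceQuotient_ne_zero hF hx) hF, congruenceQuotient_mul hF hx]
  refine (natDegree_sub_le _ _).trans (max_le (mem_monicsOfDegree.1 hN).2.le ?_)
  exact (natDegree_C_mul_le _ _).trans
    ((mem_monicsOfDegree.1 (mul_mem_monicsOfDegree hB hD)).2.trans_le hi)

lemma degree_congruenceQuotient_sub_lt {F : Fq[X]} (hF : F ≠ 0) {a : Fq} {i β δ : ℕ}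
    (hi : β + δ ≤ i) {x x' : Fq[X] × Fq[X] × Fq[X]} (hx : x ∈ congruenceTriples F a i β δ)
    (hx' : x' ∈ congruenceTriples F a i β δ) :
    (congruenceQuotient F a x - congruenceQuotient F a x').degree < (i - F.natDegree : ℕ) := by
  obtain ⟨⟨hB, hD, hN⟩, -⟩ := mem_congruenceTriples.1 hx
  obtain ⟨⟨hB', hD', hN'⟩, -⟩ := mem_congruenceTriples.1 hx'
  have hBD : (C a * (x.1 * x.2.1 - x'.1 * x'.2.1)).degree < i := by
    rw [C_mul']
    exact (degree_smul_le _ _).trans_lt ((degree_sub_lt_of_mem_monicsOfDegree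
      (mul_mem_monicsOfDegree hB hD) (mul_mem_monicsOfDegree hB' hD')).trans_le (mod_cast hi))
  have hmul : ((congruenceQuotient F a x - congruenceQuotient F a x') * F).degree < i := by
    rw [sub_mul, congruenceQuotient_mul hF hx, congruenceQuotient_mul hF hx',
      sub_sub_sub_comm, ← mul_sub]
    exact (degree_sub_le _ _).trans_lt
      (max_lt (degree_sub_lt_of_mem_monicsOfDegree hN hN') hBD)
  by_cases h0 : congruenceQuotient F a x - congruenceQuotient F a x' = 0
  · rw [h0, degree_zero]
    exact WithBot.bot_lt_coe _
  rw [degree_mul, degree_eq_natDegree h0, degree_eq_natDegree hF, ← Nat.cast_add,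
    Nat.cast_lt] at hmul
  rw [degree_eq_natDegree h0, Nat.cast_lt]
  omega

lemma dvd_congruenceQuotient {F : Fq[X]} (hF : F ≠ 0) {a : Fq} {i β δ : ℕ}
    {x : Fq[X] × Fq[X] × Fq[X]} (hx : x ∈ congruenceTriples F a i β δ) {h : Fq[X]}
    (hD : h ∣ x.2.1) (hN : h ∣ x.2.2) : h ∣ congruenceQuotient F a x := by
  have hco : IsCoprime h F :=
    (mem_congruenceTriples.1 hx).2.1.of_mul_left_right.of_isCoprime_of_dvd_left hN
  refine hco.dvd_of_dvd_mul_right ?_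
  rw [congruenceQuotient_mul hF hx]
  exact dvd_sub hN ((hD.mul_left _).mul_left _)

/-- With `L` and `D` fixed, the congruence `N ≡ 0` modulo `K` determines `B` modulo
`K / gcd(K, D)`. -/
lemma dvd_gcd_mul_sub {F : Fq[X]} (hF : F ≠ 0) {a : Fq} (ha : a ≠ 0) {i β δ : ℕ}
    {x x' : Fq[X] × Fq[X] × Fq[X]} (hx : x ∈ congruenceTriples F a i β δ)
    (hx' : x' ∈ congruenceTriples F a i β δ)
    (hL : congruenceQuotient F a x = congruenceQuotient F a x') (hD : x.2.1 = x'.2.1) {K : Fq[X]}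
    (hK : K ∣ x.2.2) (hK' : K ∣ x'.2.2) :
    K ∣ EuclideanDomain.gcd K x.2.1 * (x.1 - x'.1) := by
  have hsub : K ∣ C a * (x.2.1 * (x.1 - x'.1)) := by
    have hmul := congruenceQuotient_mul hF hx
    rw [hL, congruenceQuotient_mul hF hx', hD] at hmul
    convert dvd_sub hK hK' using 1
    rw [hD]
    linear_combination hmul
  have hunit : IsUnit (C a) := isUnit_C.2 ha.isUnit
  rw [EuclideanDomain.gcd_eq_gcd_ab, add_mul]
  refine dvd_add ((dvd_mul_right K _).mul_right _) ?_
  rw [mul_right_comm]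
  exact (hunit.dvd_mul_left.1 hsub).mul_right _

/-- `B` varies in a progression with `N = a B D + L F`, so that the cofactor `L` need not be
large compared with `K`. -/
lemma card_le_pow_mul_card_image_congruenceQuotient {F : Fq[X]} (hF : F ≠ 0) {a : Fq}
    (ha : a ≠ 0) {i β δ : ℕ} {h K : Fq[X]} (hh : h ≠ 0) (hK : K ≠ 0)
    {V : Finset (Fq[X] × Fq[X] × Fq[X])} (hV : V ⊆ congruenceTriples F a i β δ)
    (hKV : ∀ x ∈ V, h * K ∣ x.2.2)
    (hgcd : ∀ x ∈ V, normalize (EuclideanDomain.gcd (h * K) x.2.1) = h) :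
    #V ≤ q ^ (β - K.natDegree) * #(V.image fun x ↦ (x.2.1, congruenceQuotient F a x)) := by
  refine card_le_pow_mul_card_image (fun x ↦ (x.2.1, congruenceQuotient F a x)) Prod.fst
    hK (fun x hx x' hx' hDL hB ↦ ?_) (fun x hx x' hx' hDL ↦ ?_) fun x hx x' hx' ↦ ?_
  · obtain ⟨hD, hL⟩ := Prod.mk.inj hDL
    have hmul := congruenceQuotient_mul hF (hV hx)
    rw [hL, congruenceQuotient_mul hF (hV hx'), hB, hD, sub_left_inj] at hmul
    exact Prod.ext hB (Prod.ext hD hmul.symm)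
  · obtain ⟨hD, hL⟩ := Prod.mk.inj hDL
    have hdvd := dvd_gcd_mul_sub hF ha (hV hx) (hV hx') hL hD (hKV x hx) (hKV x' hx')
    rw [← ((normalize_associated _).mul_right _).dvd_iff_dvd_right, hgcd x hx] at hdvd
    exact (mul_dvd_mul_iff_left hh).1 hdvd
  · exact degree_sub_lt_of_mem_monicsOfDegree (mem_congruenceTriples.1 (hV hx)).1.1
      (mem_congruenceTriples.1 (hV hx')).1.1

lemma card_image_congruenceQuotient_le {F : Fq[X]} (hF : F ≠ 0) {a : Fq} {i β δ : ℕ}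
    (hi : β + δ ≤ i) {h : Fq[X]} (hh : h ≠ 0) {V : Finset (Fq[X] × Fq[X] × Fq[X])}
    (hV : V ⊆ congruenceTriples F a i β δ) (hD : ∀ x ∈ V, h ∣ x.2.1)
    (hL : ∀ x ∈ V, h ∣ congruenceQuotient F a x) :
    #(V.image fun x ↦ (x.2.1, congruenceQuotient F a x)) ≤
      q ^ (δ - h.natDegree) * q ^ (i - F.natDegree - h.natDegree) := by
  have himageD : #(V.image fun x ↦ x.2.1) ≤ q ^ (δ - h.natDegree) :=
    card_image_le_pow_of_dvd_sub hh
      (fun x hx x' hx' ↦ dvd_sub (hD x hx) (hD x' hx')) fun x hx x' hx' ↦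
        degree_sub_lt_of_mem_monicsOfDegree (mem_congruenceTriples.1 (hV hx)).1.2.1
          (mem_congruenceTriples.1 (hV hx')).1.2.1
  have himageL : #(V.image (congruenceQuotient F a)) ≤ q ^ (i - F.natDegree - h.natDegree) :=
    card_image_le_pow_of_dvd_sub hh
      (fun x hx x' hx' ↦ dvd_sub (hL x hx) (hL x' hx')) fun x hx x' hx' ↦
        degree_congruenceQuotient_sub_lt hF hi (hV hx) (hV hx')
  calc #(V.image fun x ↦ (x.2.1, congruenceQuotient F a x))
      ≤ #((V.image fun x ↦ x.2.1) ×ˢ V.image (congruenceQuotient F a)) :=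
        card_le_card (image_subset_iff.2 fun x hx ↦ mem_product.2
          ⟨mem_image_of_mem (fun x ↦ x.2.1) hx, mem_image_of_mem _ hx⟩)
    _ ≤ q ^ (δ - h.natDegree) * q ^ (i - F.natDegree - h.natDegree) :=
        (card_product _ _).trans_le (Nat.mul_le_mul himageD himageL)

lemma card_congruenceTriples_gcd_eq_mul_le {F : Fq[X]} (hF : F ≠ 0) {a : Fq} (ha : a ≠ 0)
    {i β δ : ℕ} (hi : β + δ ≤ i) {K h : Fq[X]} (hK : K ≠ 0) (hKβ : K.natDegree ≤ β)
    {V : Finset (Fq[X] × Fq[X] × Fq[X])} (hV : V ⊆ congruenceTriples F a i β δ)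
    (hKV : ∀ x ∈ V, K ∣ x.2.2) (hgcd : ∀ x ∈ V, normalize (EuclideanDomain.gcd K x.2.1) = h) :
    #V * q ^ (F.natDegree + K.natDegree + h.natDegree) ≤ q ^ (i + β + δ) := by
  obtain rfl | ⟨x₀, hx₀⟩ := V.eq_empty_or_nonempty
  · simp
  have hhK (x) (hx : x ∈ V) : h ∣ K := by
    rw [← hgcd x hx, normalize_dvd_iff]
    exact EuclideanDomain.gcd_dvd_left _ _
  have hD (x) (hx : x ∈ V) : h ∣ x.2.1 := by
    rw [← hgcd x hx, normalize_dvd_iff]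
    exact EuclideanDomain.gcd_dvd_right _ _
  have hL (x) (hx : x ∈ V) : h ∣ congruenceQuotient F a x :=
    dvd_congruenceQuotient hF (hV hx) (hD x hx) ((hhK x hx).trans (hKV x hx))
  obtain ⟨K', rfl⟩ := hhK x₀ hx₀
  obtain ⟨hh, hK'⟩ := mul_ne_zero_iff.1 hK
  have hhδ : h.natDegree ≤ δ := by
    obtain ⟨hm, hdeg⟩ := mem_monicsOfDegree.1 (mem_congruenceTriples.1 (hV hx₀)).1.2.1
    exact (natDegree_le_of_dvd (hD x₀ hx₀) hm.ne_zero).trans_eq hdeg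
  have hhL := natDegree_le_of_dvd (hL x₀ hx₀) (congruenceQuotient_ne_zero hF (hV hx₀))
  have hLi := natDegree_congruenceQuotient_add_le hF hi (hV hx₀)
  calc #V * q ^ (F.natDegree + (h * K').natDegree + h.natDegree)
      ≤ q ^ (β - K'.natDegree) * (q ^ (δ - h.natDegree) * q ^ (i - F.natDegree - h.natDegree)) *
          q ^ (F.natDegree + (h * K').natDegree + h.natDegree) :=
        Nat.mul_le_mul_right _
          ((card_le_pow_mul_card_image_congruenceQuotient hF ha hh hK' hV hKV hgcd).trans
            (Nat.mul_le_mul_left _ (card_image_congruenceQuotient_le hF hi hh hV hD hL)))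
    _ = q ^ (i + β + δ) := by
        rw [natDegree_mul hh hK'] at hKβ ⊢
        rw [← pow_add, ← pow_add, ← pow_add]
        congr 1
        omega

lemma card_congruenceTriples_dvd_le_of_add_le {F : Fq[X]} (hF : F ≠ 0) (a : Fq) {i : ℕ} (β δ : ℕ)
    {K : Fq[X]} (hK : K ≠ 0) (hi : K.natDegree + F.natDegree ≤ i) :
    (#{x ∈ congruenceTriples F a i β δ | K ∣ x.2.2} : ℝ) ≤
      q ^ (i + β + δ) / q ^ F.natDegree * (((q : ℝ) ^ K.natDegree)⁻¹ * sigmaNegOne K) := by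
  have hcard : (#{x ∈ congruenceTriples F a i β δ | K ∣ x.2.2} : ℝ) *
      q ^ (F.natDegree + K.natDegree) ≤ q ^ (i + β + δ) :=
    mod_cast card_congruenceTriples_dvd_mul_le_of_add_le hF a β δ hK hi
  calc (#{x ∈ congruenceTriples F a i β δ | K ∣ x.2.2} : ℝ)
      ≤ q ^ (i + β + δ) / q ^ (F.natDegree + K.natDegree) := by rwa [le_div_iff₀ (by positivity)]
    _ = q ^ (i + β + δ) / q ^ F.natDegree * (((q : ℝ) ^ K.natDegree)⁻¹ * 1) := by
        rw [pow_add _ F.natDegree, mul_one, div_mul_eq_div_div,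
          div_eq_mul_inv _ ((q : ℝ) ^ K.natDegree)]
    _ ≤ q ^ (i + β + δ) / q ^ F.natDegree * (((q : ℝ) ^ K.natDegree)⁻¹ * sigmaNegOne K) := by
        gcongr
        exact one_le_sigmaNegOne hK

lemma card_congruenceTriples_dvd_le_of_le {F : Fq[X]} (hF : F ≠ 0) {a : Fq} (ha : a ≠ 0)
    {i β δ : ℕ} (hi : β + δ ≤ i) {K : Fq[X]} (hK : K ≠ 0) (hKβ : K.natDegree ≤ β) :
    (#{x ∈ congruenceTriples F a i β δ | K ∣ x.2.2} : ℝ) ≤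
      q ^ (i + β + δ) / q ^ F.natDegree * (((q : ℝ) ^ K.natDegree)⁻¹ * sigmaNegOne K) := by
  set U := {x ∈ congruenceTriples F a i β δ | K ∣ x.2.2}
  have hgcd (x) (_ : x ∈ U) : normalize (EuclideanDomain.gcd K x.2.1) ∈ monicDivisors K := by
    rw [mem_monicDivisors hK, normalize_dvd_iff]
    exact ⟨monic_normalize fun h0 ↦ hK (EuclideanDomain.gcd_eq_zero_iff.1 h0).1,
      EuclideanDomain.gcd_dvd_left _ _⟩
  have hfiber (h : Fq[X]) :
      (#{x ∈ U | normalize (EuclideanDomain.gcd K x.2.1) = h} : ℝ) ≤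
        q ^ (i + β + δ) / q ^ F.natDegree *
          (((q : ℝ) ^ K.natDegree)⁻¹ * ((q : ℝ) ^ h.natDegree)⁻¹) := by
    have hcard : #{x ∈ U | normalize (EuclideanDomain.gcd K x.2.1) = h} *
        q ^ (F.natDegree + K.natDegree + h.natDegree) ≤ q ^ (i + β + δ) :=
      card_congruenceTriples_gcd_eq_mul_le hF ha hi hK hKβ
        ((filter_subset _ _).trans (filter_subset _ _))
        (fun x hx ↦ (mem_filter.1 (mem_filter.1 hx).1).2) fun x hx ↦ (mem_filter.1 hx).2
    rw [← mul_inv, ← div_eq_mul_inv, div_div, ← pow_add, ← pow_add, ← add_assoc,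
      le_div_iff₀ (by positivity)]
    exact_mod_cast hcard
  calc (#U : ℝ)
      = ∑ h ∈ monicDivisors K, (#{x ∈ U | normalize (EuclideanDomain.gcd K x.2.1) = h} : ℝ) :=
        mod_cast card_eq_sum_card_fiberwise hgcd
    _ ≤ ∑ h ∈ monicDivisors K, q ^ (i + β + δ) / q ^ F.natDegree *
          (((q : ℝ) ^ K.natDegree)⁻¹ * ((q : ℝ) ^ h.natDegree)⁻¹) :=
        sum_le_sum fun h _ ↦ hfiber h
    _ = q ^ (i + β + δ) / q ^ F.natDegree * (((q : ℝ) ^ K.natDegree)⁻¹ * sigmaNegOne K) := by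
        rw [← mul_sum, ← mul_sum, sigmaNegOne]

lemma le_ceil_add_one_mul_of_lt {ε : ℝ} (hε : 0 < ε) {f i n y : ℕ} (hn : (1 + ε) * f < n)
    (hny : n ≤ f + 3 * y) (hiy : i ≤ f + y) : i ≤ (⌈3 / ε⌉₊ + 1) * y := by
  have hεf : ε * f ≤ 3 * y := by
    have hny' : (n : ℝ) ≤ f + 3 * y := mod_cast hny
    linarith
  have hfy : f ≤ ⌈3 / ε⌉₊ * y := by
    rw [← Nat.cast_le (α := ℝ), Nat.cast_mul]
    calc (f : ℝ) ≤ 3 / ε * y := by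
          rw [div_mul_eq_mul_div, le_div_iff₀ hε]
          linarith
      _ ≤ ⌈3 / ε⌉₊ * y := by
          gcongr
          exact Nat.le_ceil _
  rw [add_one_mul]
  omega

/-- The threshold `y` is the larger of the two degrees up to which the divisors of `N` can be
controlled: up to `i - deg F` by varying `N`, and up to `β` by varying `B`. -/
lemma card_offDiagonal_le_of_le {F : Fq[X]} (hF : F ≠ 0) {a : Fq} (ha : a ≠ 0) {α β γ δ : ℕ}
    (h₁ : β + δ ≤ α + γ) (h₂ : δ ≤ β) {ε : ℝ} (hε : 0 < ε)
    (hn : (1 + ε) * F.natDegree < (α + β + γ + δ : ℕ)) :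
    (#(offDiagonal F a α β γ δ) : ℝ) ≤ divisorMajorantConst (⌈3 / ε⌉₊ + 1) *
      ((α + β + γ + δ : ℕ) + 1) * (q ^ (α + β + γ + δ) / q ^ F.natDegree) := by
  set i := α + γ
  set f := F.natDegree
  set k := ⌈3 / ε⌉₊ + 1
  set y := max (i - f) β
  have hik : i ≤ k * y := le_ceil_add_one_mul_of_lt hε hn (by omega) (by omega)
  have hmaj (x) (hx : x ∈ congruenceTriples F a i β δ) : (#(monicDivisors x.2.2) : ℝ) ≤
      ∑ K ∈ monicsLE Fq y with K ∣ x.2.2, divisorMajorant Fq k y K := by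
    obtain ⟨hN, hdeg⟩ := mem_monicsOfDegree.1 (mem_congruenceTriples.1 hx).1.2.2
    exact card_monicDivisors_le_sum_divisorMajorant k y hN (hdeg.trans_le hik)
  have hcount (K) (hK : K ∈ monicsLE Fq y) :
      (#{x ∈ congruenceTriples F a i β δ | K ∣ x.2.2} : ℝ) ≤
        q ^ (i + β + δ) / q ^ f * (((q : ℝ) ^ K.natDegree)⁻¹ * sigmaNegOne K) := by
    obtain ⟨hKm, hKy⟩ := mem_monicsLE.1 hK
    rcases le_or_gt K.natDegree β with hKβ | hKβ
    · exact card_congruenceTriples_dvd_le_of_le hF ha h₁ hKm.ne_zero hKβ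
    · exact card_congruenceTriples_dvd_le_of_add_le hF a β δ hKm.ne_zero (by omega)
  calc (#(offDiagonal F a α β γ δ) : ℝ)
      ≤ ∑ x ∈ congruenceTriples F a i β δ, (#(monicDivisors x.2.2) : ℝ) :=
        mod_cast card_offDiagonal_le_sum F a α β γ δ
    _ ≤ q ^ (i + β + δ) / q ^ f * majorantCost y (divisorMajorant Fq k y) :=
        sum_card_monicDivisors_le (divisorMajorant_nonneg k y) hmaj hcount
    _ ≤ q ^ (i + β + δ) / q ^ f * (divisorMajorantConst k * (y + 1)) := by
        gcongr
        exact majorantCost_divisorMajorant_le k y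
    _ ≤ q ^ (i + β + δ) / q ^ f * (divisorMajorantConst k * ((α + β + γ + δ : ℕ) + 1)) := by
        have := divisorMajorantConst_pos k
        gcongr
        omega
    _ = divisorMajorantConst k * ((α + β + γ + δ : ℕ) + 1) * (q ^ (α + β + γ + δ) / q ^ f) := by
        rw [show i + β + δ = α + β + γ + δ by omega]
        ring

lemma card_offDiagonal_le {F : Fq[X]} (hF : F ≠ 0) {a : Fq} (ha : a ≠ 0) {α β γ δ : ℕ}
    {ε : ℝ} (hε : 0 < ε) (hn : (1 + ε) * F.natDegree < (α + β + γ + δ : ℕ)) :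
    (#(offDiagonal F a α β γ δ) : ℝ) ≤ divisorMajorantConst (⌈3 / ε⌉₊ + 1) *
      ((α + β + γ + δ : ℕ) + 1) * (q ^ (α + β + γ + δ) / q ^ F.natDegree) := by
  wlog h₁ : β + δ ≤ α + γ generalizing a α β γ δ
  · have hcard := card_offDiagonal_le_inv F ha α β γ δ
    have hsum : α + β + γ + δ = β + α + δ + γ := by ring
    rw [hsum] at hn ⊢
    exact (Nat.cast_le.2 hcard).trans (this (inv_ne_zero ha) hn (by omega))
  wlog h₂ : δ ≤ β generalizing α β γ δ
  · have hcard := card_offDiagonal_le_comm F a α β γ δ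
    have hsum : α + β + γ + δ = γ + δ + α + β := by ring
    rw [hsum] at hn ⊢
    exact (Nat.cast_le.2 hcard).trans (this hn (by omega) (by omega))
  exact card_offDiagonal_le_of_le hF ha h₁ h₂ hε hn

/-- The quadruples counted in the theorem, with prescribed `deg (A B) = z₁` and
`deg (C D) = z₂`. -/
def offDiagonalQuadruples {R : Type*} [Field R] (F : R[X]) (a : R) (z₁ z₂ : ℕ) :
    Set (R[X] × R[X] × R[X] × R[X]) :=
  {t | t.1.Monic ∧ t.2.1.Monic ∧ t.2.2.1.Monic ∧ t.2.2.2.Monic ∧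
    (t.1 * t.2.1).natDegree = z₁ ∧ (t.2.2.1 * t.2.2.2).natDegree = z₂ ∧
    IsCoprime (t.1 * t.2.1 * t.2.2.1 * t.2.2.2) F ∧
    F ∣ t.1 * t.2.2.1 - C a * (t.2.1 * t.2.2.2) ∧ t.1 * t.2.2.1 ≠ t.2.1 * t.2.2.2}

lemma ncard_offDiagonalQuadruples_le_sum (F : Fq[X]) (a : Fq) (z₁ z₂ : ℕ) :
    (offDiagonalQuadruples F a z₁ z₂).ncard ≤
      ∑ u ∈ antidiagonal z₁ ×ˢ antidiagonal z₂, #(offDiagonal F a u.1.1 u.1.2 u.2.1 u.2.2) := by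
  refine le_trans ?_ card_biUnion_le
  rw [← Set.ncard_coe_finset]
  refine Set.ncard_le_ncard ?_ (finite_toSet _)
  rintro ⟨A, B, C, D⟩ ⟨hA, hB, hC, hD, h₁, h₂, h⟩
  rw [hA.natDegree_mul hB] at h₁
  rw [hC.natDegree_mul hD] at h₂
  exact mem_coe.2 <| mem_biUnion.2
    ⟨((A.natDegree, B.natDegree), (C.natDegree, D.natDegree)),
      mem_product.2 ⟨mem_antidiagonal.2 h₁, mem_antidiagonal.2 h₂⟩,
      mem_offDiagonal.2 ⟨⟨mem_monicsOfDegree.2 ⟨hA, rfl⟩, mem_monicsOfDegree.2 ⟨hB, rfl⟩,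
        mem_monicsOfDegree.2 ⟨hC, rfl⟩, mem_monicsOfDegree.2 ⟨hD, rfl⟩⟩, h⟩⟩

lemma ncard_offDiagonalQuadruples_le {F : Fq[X]} (hF : F ≠ 0) {a : Fq} (ha : a ≠ 0) {z₁ z₂ : ℕ}
    {ε : ℝ} (hε : 0 < ε) (hn : (1 + ε) * F.natDegree < (z₁ + z₂ : ℕ)) :
    ((offDiagonalQuadruples F a z₁ z₂).ncard : ℝ) ≤ (z₁ + 1) * (z₂ + 1) *
      (divisorMajorantConst (⌈3 / ε⌉₊ + 1) * ((z₁ + z₂ : ℕ) + 1) *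
        (q ^ (z₁ + z₂) / q ^ F.natDegree)) := by
  calc ((offDiagonalQuadruples F a z₁ z₂).ncard : ℝ)
      ≤ ∑ u ∈ antidiagonal z₁ ×ˢ antidiagonal z₂,
          (#(offDiagonal F a u.1.1 u.1.2 u.2.1 u.2.2) : ℝ) :=
        mod_cast ncard_offDiagonalQuadruples_le_sum F a z₁ z₂
    _ ≤ ∑ u ∈ antidiagonal z₁ ×ˢ antidiagonal z₂, divisorMajorantConst (⌈3 / ε⌉₊ + 1) *
          ((z₁ + z₂ : ℕ) + 1) * (q ^ (z₁ + z₂) / q ^ F.natDegree) := by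
        refine sum_le_sum fun u hu ↦ ?_
        obtain ⟨h₁, h₂⟩ := mem_product.1 hu
        have hsum : z₁ + z₂ = u.1.1 + u.1.2 + u.2.1 + u.2.2 := by
          rw [← mem_antidiagonal.1 h₁, ← mem_antidiagonal.1 h₂, ← add_assoc]
        rw [hsum] at hn ⊢
        exact card_offDiagonal_le hF ha hε hn
    _ = (z₁ + 1) * (z₂ + 1) * (divisorMajorantConst (⌈3 / ε⌉₊ + 1) * ((z₁ + z₂ : ℕ) + 1) *
          (q ^ (z₁ + z₂) / q ^ F.natDegree)) := by
        rw [sum_const, card_product, Nat.card_antidiagonal, Nat.card_antidiagonal, nsmul_eq_mul]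
        push_cast
        rfl

end OffDiagonal

lemma ffPhi_pos {k : Type*} [Field k] [Finite k] (F : k[X]) : 0 < ffPhi F := by
  have := Fintype.ofFinite k
  unfold ffPhi
  split_ifs with h0
  · exact one_pos
  have hF : 0 < F.degree := natDegree_pos_iff_degree_pos.1 (Nat.pos_of_ne_zero h0)
  have : Finite {A : k[X] // A.degree < F.degree ∧ IsCoprime A F} :=
    Finite.Set.subset (polysLT k F.natDegree : Set k[X]) fun A hA ↦ by
      rw [mem_coe, mem_polysLT]
      exact hA.1.trans_le degree_le_natDegree
  have : Nonempty {A : k[X] // A.degree < F.degree ∧ IsCoprime A F} :=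
    ⟨1, by rwa [degree_one], isCoprime_one_left⟩
  exact Nat.card_pos

lemma ffPhi_le (F : Fq[X]) : ffPhi F ≤ q ^ F.natDegree := by
  unfold ffPhi
  split_ifs with h0
  · exact Nat.one_le_pow _ _ Fintype.card_pos
  rw [← card_polysLT, ← Set.ncard_coe_finset]
  refine Set.ncard_le_ncard (s := {A : Fq[X] | A.degree < F.degree ∧ IsCoprime A F}) ?_
    (finite_toSet _)
  intro A hA
  rw [mem_coe, mem_polysLT]
  exact hA.1.trans_le degree_le_natDegree

theorem offdiagonal_count_bound_general {ε : ℝ} (hε : 0 < ε) :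
    ∃ Cst : ℝ, 0 < Cst ∧ ∀ (Fq : Type*) [Field Fq] [Fintype Fq] (F : Fq[X]), F ≠ 0 →
      ∀ a : Fq, a ≠ 0 → ∀ z₁ z₂ : ℕ, (1 + ε) * F.natDegree < (z₁ + z₂ : ℕ) →
      ((offDiagonalQuadruples F a z₁ z₂).ncard : ℝ) ≤
        Cst * (Fintype.card Fq : ℝ) ^ (z₁ + z₂) * ((z₁ + z₂ : ℕ) : ℝ) ^ 3 /
          (Fintype.card Fq : ℝ) ^ F.natDegree := by
  have hconst := divisorMajorantConst_pos (⌈3 / ε⌉₊ + 1)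
  refine ⟨8 * divisorMajorantConst (⌈3 / ε⌉₊ + 1), by positivity, ?_⟩
  intro Fq _ _ F hF a ha z₁ z₂ hn
  have hz : (1 : ℝ) ≤ (z₁ + z₂ : ℕ) :=
    Nat.one_le_cast.2 (Nat.cast_pos.1 (hn.trans_le' (by positivity)))
  have hz₁ : (z₁ : ℝ) ≤ (z₁ + z₂ : ℕ) := mod_cast Nat.le_add_right _ _
  have hz₂ : (z₂ : ℝ) ≤ (z₁ + z₂ : ℕ) := mod_cast Nat.le_add_left _ _
  refine (ncard_offDiagonalQuadruples_le hF ha hε hn).trans ?_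
  generalize ((z₁ + z₂ : ℕ) : ℝ) = n at hz hz₁ hz₂ ⊢
  calc (z₁ + 1 : ℝ) * (z₂ + 1) * (divisorMajorantConst (⌈3 / ε⌉₊ + 1) * (n + 1) *
        ((Fintype.card Fq : ℝ) ^ (z₁ + z₂) / (Fintype.card Fq : ℝ) ^ F.natDegree))
      ≤ (2 * n) * (2 * n) * (divisorMajorantConst (⌈3 / ε⌉₊ + 1) * (2 * n) *
        ((Fintype.card Fq : ℝ) ^ (z₁ + z₂) / (Fintype.card Fq : ℝ) ^ F.natDegree)) := by
        gcongr <;> linarith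
    _ = _ := by ring

end Development

/-- For monic `F`, `a ∈ F_q*`, and `z₁ + z₂ > (19/10)·deg F`, the number of monic
quadruples `(A,B,C,D)` with `deg AB = z₁`, `deg CD = z₂`, `(ABCD,F)=1`,
`AC ≡ a·BD (mod F)` and `AC ≠ BD` is `O(q^{z₁+z₂}(z₁+z₂)³/φ(F))`
with an absolute implied constant. -/
theorem offdiagonal_count_bound :
    ∃ Cst : ℝ, 0 < Cst ∧ ∀ (Fq : Type) [Field Fq] [Fintype Fq] (F : Polynomial Fq),
      F.Monic → ∀ a : Fq, a ≠ 0 → ∀ z₁ z₂ : ℕ, 19 * F.natDegree < 10 * (z₁ + z₂) →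
      (Nat.card {t : Polynomial Fq × Polynomial Fq × Polynomial Fq × Polynomial Fq //
          t.1.Monic ∧ t.2.1.Monic ∧ t.2.2.1.Monic ∧ t.2.2.2.Monic ∧
          (t.1 * t.2.1).natDegree = z₁ ∧ (t.2.2.1 * t.2.2.2).natDegree = z₂ ∧
          IsCoprime (t.1 * t.2.1 * t.2.2.1 * t.2.2.2) F ∧
          F ∣ (t.1 * t.2.2.1 - Polynomial.C a * (t.2.1 * t.2.2.2)) ∧
          t.1 * t.2.2.1 ≠ t.2.1 * t.2.2.2} : ℝ)
        ≤ Cst * (Fintype.card Fq : ℝ) ^ (z₁ + z₂) * ((z₁ + z₂ : ℕ) : ℝ) ^ 3 / ffPhi F := by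
  obtain ⟨Cst, hCst, hbound⟩ := offdiagonal_count_bound_general (ε := 9 / 10) (by norm_num)
  refine ⟨Cst, hCst, fun Fq _ _ F hF a ha z₁ z₂ hz ↦ ?_⟩
  have hn : (1 + 9 / 10 : ℝ) * F.natDegree < (z₁ + z₂ : ℕ) := by
    have : (19 : ℝ) * F.natDegree < 10 * (z₁ + z₂ : ℕ) := mod_cast hz
    linarith
  have hφ : (0 : ℝ) < ffPhi F := mod_cast ffPhi_pos F
  refine (hbound Fq F hF.ne_zero a ha z₁ z₂ hn).trans ?_
  gcongr
  exact_mod_cast ffPhi_le F
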